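/- arXiv:2308.03634 — 3 statements merged into one kernel-verified Lean document; each statement's English description precedes it below -/
import Mathlib

section
/- Let 𝕏 be a σ-finite measure space and ℳ a finitely-generated Banach L^0(𝕏)-module. Then every L^0(𝕏)-linear operator T : ℳ → L^0(𝕏) is automatically continuous, i.e. T ∈ ℳ*: there exists g ∈ L^0(𝕏)⁺ such that |T(v)| ≤ g|v| for all v ∈ ℳ. -/
/-!
A bound for a functional on a dense submodule says nothing elsewhere, so one shows, as for
finite-dimensional subspaces of normed spaces, that a finitely generated submodule is closed, and
bounds the functional one generator at a time. Let `N` be a closed submodule and `w` a new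
generator. Gluing elements of `N` along measurable sets makes the distances `|n - w|`, `n ∈ N`,
directed downward, hence their essential infimum `d` is an almost everywhere limit of a sequence
of them. On `{d = 0}` the generator `w` already belongs to `N`, and since `L⁰(𝕏)` is von Neumann
regular it remains to consider coefficients `f` in the ideal generated by `d`. There
`|f| d ≤ |n + f w|` bounds `f` by a multiple of `|n + f w|`. Hence the coefficients of a convergent
sequence converge, so that `N + L⁰(𝕏) w` is closed, and a bound on `N` extends to `N + L⁰(𝕏) w`.
-/

open MeasureTheory Filter Set TensorProduct

noncomputable section

namespace Paper

variable {X : Type*} [MeasurableSpace X]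

/-- The space `L⁰(𝕏)` of real-valued measurable functions up to `μ`-a.e. equality. -/
abbrev L0 (μ : Measure X) : Type _ := X →ₘ[μ] ℝ

instance (μ : Measure X) : CommRing (L0 μ) :=
  { (inferInstance : AddCommGroup (L0 μ)), (inferInstance : CommMonoid (L0 μ)) with
    left_distrib := fun a b c => AEEqFun.toGerm_injective <| by
      simp only [AEEqFun.mul_toGerm, AEEqFun.add_toGerm, mul_add]
    right_distrib := fun a b c => AEEqFun.toGerm_injective <| by
      simp only [AEEqFun.mul_toGerm, AEEqFun.add_toGerm, add_mul]
    zero_mul := fun a => AEEqFun.toGerm_injective <| by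
      simp only [AEEqFun.mul_toGerm, AEEqFun.zero_toGerm, zero_mul]
    mul_zero := fun a => AEEqFun.toGerm_injective <| by
      simp only [AEEqFun.mul_toGerm, AEEqFun.zero_toGerm, mul_zero] }

/-- The distance on `L⁰(𝕏)` inducing the topology of convergence in measure, defined through
the auxiliary finite measure `μ.toFinite` (which satisfies `μ ≪ μ.toFinite ≪ μ`). -/
noncomputable def dL0 (μ : Measure X) [SFinite μ] (f g : L0 μ) : ℝ :=
  ∫ x, min |f x - g x| 1 ∂(μ.toFinite)

/-- A Banach `L⁰(𝕏)`-module: a module over `L⁰(𝕏)` endowed with a pointwise norm, complete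
with respect to the induced distance. -/
class BanachMod (μ : Measure X) [SFinite μ] (M : Type*) [AddCommGroup M]
    [Module (L0 μ) M] where
  pn : M → L0 μ
  pn_nonneg : ∀ v : M, 0 ≤ pn v
  pn_eq_zero : ∀ v : M, pn v = 0 ↔ v = 0
  pn_add_le : ∀ v w : M, pn (v + w) ≤ pn v + pn w
  pn_smul : ∀ (f : L0 μ) (v : M), pn (f • v) = |f| * pn v
  complete : ∀ u : ℕ → M,
    (∀ ε : ℝ, 0 < ε → ∃ N : ℕ, ∀ m ≥ N, ∀ n ≥ N, dL0 μ (pn (u m - u n)) 0 < ε) →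
    ∃ v : M, Tendsto (fun n => dL0 μ (pn (u n - v)) 0) atTop (nhds 0)

/-- The pointwise norm of a Banach `L⁰(𝕏)`-module, with the measure explicit. -/
noncomputable def pn (μ : Measure X) [SFinite μ] {M : Type*} [AddCommGroup M]
    [Module (L0 μ) M] [BanachMod μ M] (v : M) : L0 μ :=
  BanachMod.pn v

/-- The distance on a Banach `L⁰(𝕏)`-module. -/
noncomputable def dM (μ : Measure X) [SFinite μ] {M : Type*} [AddCommGroup M]
    [Module (L0 μ) M] [BanachMod μ M] (v w : M) : ℝ :=
  dL0 μ (pn μ (v - w)) 0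

section Defs

variable (μ : Measure X) [SFinite μ]
variable {M N : Type*} [AddCommGroup M] [Module (L0 μ) M] [BanachMod μ M]
  [AddCommGroup N] [Module (L0 μ) N] [BanachMod μ N]

/-- The set of admissible bounds of a map between Banach `L⁰(𝕏)`-modules; the pointwise norm
`|T|` of a homomorphism is the infimum of this set. -/
def homBddSet (T : M → N) : Set (L0 μ) :=
  {g | 0 ≤ g ∧ ∀ v, pn μ (T v) ≤ g * pn μ v}

/-- A homomorphism of Banach `L⁰(𝕏)`-modules: an `L⁰(𝕏)`-linear map admitting a bound
`g ∈ L⁰(𝕏)⁺` with `|T v| ≤ g |v|` (equivalently, `L⁰(𝕏)`-linear and continuous). -/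
def IsHom (T : M →ₗ[L0 μ] N) : Prop :=
  ∃ g, g ∈ homBddSet μ (⇑T)

/-- The set of admissible bounds of an `L⁰(𝕏)`-valued map (for elements of the dual module). -/
def dualBddSet (ω : M → L0 μ) : Set (L0 μ) :=
  {g | 0 ≤ g ∧ ∀ v, |ω v| ≤ g * pn μ v}

/-- Membership in the dual module `ℳ*`: an `L⁰(𝕏)`-linear map `ω : ℳ → L⁰(𝕏)` admitting a
bound `g ∈ L⁰(𝕏)⁺` with `|ω v| ≤ g |v|`. -/
def IsDual (ω : M →ₗ[L0 μ] L0 μ) : Prop :=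
  ∃ g, g ∈ dualBddSet μ (⇑ω)

/-- Membership in the unit disc `𝔻_{ℳ*}` of the dual module: `|ω| ≤ 1`, equivalently
`|ω v| ≤ |v|` for every `v`. -/
def InDualDisc (ω : M →ₗ[L0 μ] L0 μ) : Prop :=
  ∀ v, |ω v| ≤ pn μ v

/-- The family of pointwise norms `|s - ∑_{i ∈ F ∪ G} v i|` for `G` finite disjoint from `F`,
whose `F`-indexed inf-sup being `0` defines `s = ∑_{i∈I} v i`. -/
def sumUB {I : Type*} (v : I → M) (s : M) (F : Finset I) : Set (L0 μ) :=
  {g | ∃ G : Finset I, Disjoint G F ∧ g = pn μ (s - (∑ i ∈ F, v i + ∑ i ∈ G, v i))}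

/-- `HasSumMod μ v s` means that the family `{v_i}` is summable in the Banach `L⁰(𝕏)`-module
with sum `s`, i.e. `⋀_F ⋁_G |s - ∑_{i ∈ F ∪ G} v_i| = 0` (the inner suprema being the values
of `b`, and the outer infimum being `0`). -/
def HasSumMod {I : Type*} (v : I → M) (s : M) : Prop :=
  ∃ b : Finset I → L0 μ, (∀ F, IsLUB (sumUB μ v s F) (b F)) ∧ IsGLB (Set.range b) 0

/-- A family in a Banach `L⁰(𝕏)`-module is summable if it has a sum. -/
def SummableMod {I : Type*} (v : I → M) : Prop :=
  ∃ s, HasSumMod μ v s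

/-- The partial sums `∑_{i ∈ F} |v i|` of the pointwise norms of a family; the element `|v|₁`
of `ℓ₁(I, ℳ)` is the supremum of this set. -/
def l1PartialSums {I : Type*} (v : I → M) : Set (L0 μ) :=
  {g | ∃ F : Finset I, g = ∑ i ∈ F, pn μ (v i)}

/-- Membership in `ℓ₁(I, ℳ)`: the partial sums of the pointwise norms admit a supremum
(equivalently, an upper bound) in `L⁰(𝕏)`. -/
def Meml1 {I : Type*} (v : I → M) : Prop :=
  ∃ b, IsLUB (l1PartialSums μ v) b

/-- The partial sums `∑_{i ∈ F} |v i|` for an `L⁰(𝕏)`-valued family. -/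
def l1PartialSumsF {I : Type*} (v : I → L0 μ) : Set (L0 μ) :=
  {g | ∃ F : Finset I, g = ∑ i ∈ F, |v i|}

/-- Membership in `ℓ₁(I, L⁰(𝕏))`. -/
def Meml1F {I : Type*} (v : I → L0 μ) : Prop :=
  ∃ b, IsLUB (l1PartialSumsF μ v) b

/-- The set whose infimum defines the projective pointwise norm: all values
`∑_{i=1}^n |v_i||w_i|` over representations `α = ∑_{i=1}^n v_i ⊗ w_i`. -/
def piReps (α : M ⊗[L0 μ] N) : Set (L0 μ) :=
  {g | ∃ (n : ℕ) (v : Fin n → M) (w : Fin n → N),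
    α = ∑ i, v i ⊗ₜ[L0 μ] w i ∧ g = ∑ i, pn μ (v i) * pn μ (w i)}

/-- The set whose supremum defines the injective pointwise norm: all values
`|∑_{i=1}^n ω(v_i) η(w_i)|` over representations `α = ∑_{i=1}^n v_i ⊗ w_i` and elements
`ω ∈ 𝔻_{ℳ*}`, `η ∈ 𝔻_{𝒩*}`. -/
def epsReps (α : M ⊗[L0 μ] N) : Set (L0 μ) :=
  {g | ∃ (n : ℕ) (v : Fin n → M) (w : Fin n → N)
    (ω : M →ₗ[L0 μ] L0 μ) (η : N →ₗ[L0 μ] L0 μ), InDualDisc μ ω ∧ InDualDisc μ η ∧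
    α = ∑ i, v i ⊗ₜ[L0 μ] w i ∧ g = |∑ i, ω (v i) * η (w i)|}

/-- `IsPiTensor μ M N P e` states that the Banach `L⁰(𝕏)`-module `P`, together with the
`L⁰(𝕏)`-linear map `e` defined on the algebraic tensor product, realizes the projective
tensor product `ℳ ⊗̂_π 𝒩`: the pointwise norm of `e α` is the projective pointwise norm
`|α|_π` and the image of `e` is dense. -/
structure IsPiTensor (M N P : Type*) [AddCommGroup M] [Module (L0 μ) M] [BanachMod μ M]
    [AddCommGroup N] [Module (L0 μ) N] [BanachMod μ N]
    [AddCommGroup P] [Module (L0 μ) P] [BanachMod μ P]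
    (e : M ⊗[L0 μ] N →ₗ[L0 μ] P) : Prop where
  pn_emb : ∀ α : M ⊗[L0 μ] N, IsGLB (piReps μ α) (pn μ (e α))
  dense : ∀ p : P, ∀ ε : ℝ, 0 < ε → ∃ α : M ⊗[L0 μ] N, dM μ (e α) p < ε

/-- `IsEpsTensor μ M N P e` states that the Banach `L⁰(𝕏)`-module `P`, together with the
`L⁰(𝕏)`-linear map `e` defined on the algebraic tensor product, realizes the injective
tensor product `ℳ ⊗̂_ε 𝒩`: the pointwise norm of `e α` is the injective pointwise norm
`|α|_ε` and the image of `e` is dense. -/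
structure IsEpsTensor (M N P : Type*) [AddCommGroup M] [Module (L0 μ) M] [BanachMod μ M]
    [AddCommGroup N] [Module (L0 μ) N] [BanachMod μ N]
    [AddCommGroup P] [Module (L0 μ) P] [BanachMod μ P]
    (e : M ⊗[L0 μ] N →ₗ[L0 μ] P) : Prop where
  pn_emb : ∀ α : M ⊗[L0 μ] N, IsLUB (epsReps μ α) (pn μ (e α))
  dense : ∀ p : P, ∀ ε : ℝ, 0 < ε → ∃ α : M ⊗[L0 μ] N, dM μ (e α) p < ε

end Defs

/-- `ℳ` is a finitely-generated Banach `L⁰(𝕏)`-module: there is a finite family of elements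
which generates `ℳ`, i.e. such that the `L⁰(𝕏)`-submodule it spans (equivalently, the
collection of simple combinations of elements of its real linear span) is dense in `ℳ`. -/
def FinitelyGenerated (μ : Measure X) [SFinite μ] (M : Type*) [AddCommGroup M]
    [Module (L0 μ) M] [BanachMod μ M] : Prop :=
  ∃ s : Finset M, ∀ v : M, ∀ ε : ℝ, 0 < ε →
    ∃ w ∈ Submodule.span (L0 μ) (s : Set M), dM μ w v < ε

namespace L0

variable {μ : Measure X}

instance : IsOrderedAddMonoid (L0 μ) where
  add_le_add_left f g hfg h := by
    induction f, g, h using AEEqFun.induction_on₃ with | H f _ g _ h _ =>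
    rw [AEEqFun.mk_le_mk] at hfg
    rw [AEEqFun.mk_add_mk, AEEqFun.mk_add_mk, AEEqFun.mk_le_mk]
    filter_upwards [hfg] with x hx using add_le_add_left hx (h x)

instance : ZeroLEOneClass (L0 μ) where
  zero_le_one := (AEEqFun.mk_le_mk _ _).2 <| .of_forall fun _ => zero_le_one

instance : IsOrderedRing (L0 μ) := .of_mul_nonneg fun f g hf hg => by
  induction f, g using AEEqFun.induction_on₂ with | H f _ g _ =>
  rw [AEEqFun.zero_def, AEEqFun.mk_le_mk] at hf hg
  rw [AEEqFun.mk_mul_mk, AEEqFun.zero_def, AEEqFun.mk_le_mk]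
  filter_upwards [hf, hg] with x hfx hgx using mul_nonneg hfx hgx

theorem abs_mul (f g : L0 μ) : |f * g| = |f| * |g| := by
  refine AEEqFun.ext ?_
  filter_upwards [AEEqFun.coeFn_abs (f * g), AEEqFun.coeFn_mul f g, AEEqFun.coeFn_mul |f| |g|,
    AEEqFun.coeFn_abs f, AEEqFun.coeFn_abs g] with x h1 h2 h3 h4 h5
  simp only [h1, h2, h3, h4, h5, Pi.mul_apply, _root_.abs_mul]

theorem exists_mul_mul_self_eq (f : L0 μ) : ∃ k : L0 μ, f * k * f = f ∧ 0 ≤ f * k ∧ f * k ≤ 1 := by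
  -- `0⁻¹ = 0` makes the pointwise inverse a quasi-inverse.
  refine ⟨AEEqFun.compMeasurable (·⁻¹) measurable_inv f, ?_⟩
  induction f using AEEqFun.induction_on with | H f hf =>
  rw [AEEqFun.compMeasurable_mk, AEEqFun.mk_mul_mk, AEEqFun.mk_mul_mk, AEEqFun.zero_def,
    AEEqFun.one_def, AEEqFun.mk_eq_mk, AEEqFun.mk_le_mk, AEEqFun.mk_le_mk]
  refine ⟨.of_forall fun x => ?_, .of_forall fun x => ?_, .of_forall fun x => ?_⟩
  · exact mul_inv_mul_cancel (f x)
  · by_cases hx : f x = 0 <;> simp [hx]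
  · exact mul_inv_le_one

theorem exists_mul_add_one_sub_mul_eq_inf (f g : L0 μ) :
    ∃ a : L0 μ, 0 ≤ a ∧ a ≤ 1 ∧ a * f + (1 - a) * g = f ⊓ g := by
  have hm : Measurable (Function.uncurry fun s t : ℝ => if s ≤ t then (1 : ℝ) else 0) :=
    Measurable.ite (measurableSet_le measurable_fst measurable_snd) measurable_const
      measurable_const
  set a : L0 μ := AEEqFun.comp₂Measurable _ hm f g
  have ha : ∀ᵐ x ∂μ, a x = if f x ≤ g x then 1 else 0 := AEEqFun.coeFn_comp₂Measurable _ hm f g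
  refine ⟨a, ?_, ?_, ?_⟩
  · rw [← AEEqFun.coeFn_le]
    filter_upwards [ha, AEEqFun.coeFn_zero (μ := μ) (β := ℝ)] with x hax h0
    rw [hax, h0]
    split_ifs <;> simp
  · rw [← AEEqFun.coeFn_le]
    filter_upwards [ha, AEEqFun.coeFn_one (μ := μ) (β := ℝ)] with x hax h1
    rw [hax, h1]
    split_ifs <;> simp
  · refine AEEqFun.ext ?_
    filter_upwards [ha, AEEqFun.coeFn_one (μ := μ) (β := ℝ), AEEqFun.coeFn_inf f g,
      AEEqFun.coeFn_add (a * f) ((1 - a) * g), AEEqFun.coeFn_mul a f,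
      AEEqFun.coeFn_mul (1 - a) g, AEEqFun.coeFn_sub 1 a] with x hax h1 hinf hadd hf hg hsub
    simp only [hinf, hadd, Pi.add_apply, hf, hg, Pi.mul_apply, hsub, Pi.sub_apply, h1, hax]
    split_ifs with hfg
    · simp [hfg]
    · simp [(not_le.1 hfg).le]

end L0

/-- Almost everywhere convergence of a sequence in `L⁰(𝕏)`. -/
def TendstoAE {μ : Measure X} (u : ℕ → L0 μ) (f : L0 μ) : Prop :=
  ∀ᵐ x ∂μ, Tendsto (fun j => u j x) atTop (nhds (f x))

namespace TendstoAE

variable {μ : Measure X} {u v : ℕ → L0 μ} {f g : L0 μ}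

theorem const (f : L0 μ) : TendstoAE (fun _ => f) f :=
  .of_forall fun _ => tendsto_const_nhds

theorem comp₂ {G : ℝ → ℝ → ℝ} (hG : Continuous (Function.uncurry G)) (hu : TendstoAE u f)
    (hv : TendstoAE v g) :
    TendstoAE (fun j => AEEqFun.comp₂ G hG (u j) (v j)) (AEEqFun.comp₂ G hG f g) := by
  filter_upwards [hu, hv, ae_all_iff.2 fun j => AEEqFun.coeFn_comp₂ G hG (u j) (v j),
    AEEqFun.coeFn_comp₂ G hG f g] with x hux hvx huvx hfgx
  simp only [huvx, hfgx]
  exact (hG.tendsto (f x, g x)).comp (hux.prodMk_nhds hvx)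

theorem add (hu : TendstoAE u f) (hv : TendstoAE v g) :
    TendstoAE (fun j => u j + v j) (f + g) :=
  hu.comp₂ continuous_add hv

theorem mul (hu : TendstoAE u f) (hv : TendstoAE v g) :
    TendstoAE (fun j => u j * v j) (f * g) :=
  hu.comp₂ continuous_mul hv

theorem inf (hu : TendstoAE u f) (hv : TendstoAE v g) :
    TendstoAE (fun j => u j ⊓ v j) (f ⊓ g) :=
  hu.comp₂ continuous_inf hv

theorem abs_sub (hu : TendstoAE u f) : TendstoAE (fun j => |u j - f|) 0 := by
  filter_upwards [hu, ae_all_iff.2 fun j => AEEqFun.coeFn_abs (u j - f),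
    ae_all_iff.2 fun j => AEEqFun.coeFn_sub (u j) f, AEEqFun.coeFn_zero (μ := μ) (β := ℝ)]
    with x hux habs hsub h0
  simp only [habs, hsub, Pi.sub_apply, h0, Pi.zero_apply]
  simpa using (hux.sub_const (f x)).abs

theorem le_of_forall_le (hu : TendstoAE u f) (hg : ∀ j, g ≤ u j) : g ≤ f := by
  rw [← AEEqFun.coeFn_le]
  filter_upwards [hu, ae_all_iff.2 fun j => AEEqFun.coeFn_le.2 (hg j)] with x hux hgx
  exact ge_of_tendsto' hux hgx

theorem squeeze_zero (hu : ∀ j, 0 ≤ u j) (huv : ∀ j, u j ≤ v j) (hv : TendstoAE v 0) :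
    TendstoAE u 0 := by
  filter_upwards [hv, ae_all_iff.2 fun j => AEEqFun.coeFn_le.2 (hu j),
    ae_all_iff.2 fun j => AEEqFun.coeFn_le.2 (huv j), AEEqFun.coeFn_zero (μ := μ) (β := ℝ)]
    with x hvx hux huvx h0
  simp only [h0, Pi.zero_apply] at hux hvx ⊢
  exact _root_.squeeze_zero hux huvx hvx

end TendstoAE

namespace L0

variable {μ : Measure X}

theorem exists_tendstoAE {u : ℕ → L0 μ}
    (hu : ∀ᵐ x ∂μ, ∃ l, Tendsto (fun j => u j x) atTop (nhds l)) : ∃ f, TendstoAE u f := by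
  obtain ⟨f, hfm, hf⟩ :=
    exists_stronglyMeasurable_limit_of_tendsto_ae (fun j => (u j).aestronglyMeasurable) hu
  refine ⟨AEEqFun.mk f hfm.aestronglyMeasurable, ?_⟩
  filter_upwards [hf, AEEqFun.coeFn_mk f hfm.aestronglyMeasurable] with x hx hfx
  rwa [hfx]

theorem exists_tendstoAE_of_antitone {u : ℕ → L0 μ} (hu : Antitone u) (hb : BddBelow (range u)) :
    ∃ f, TendstoAE u f := by
  obtain ⟨b, hb⟩ := hb
  refine exists_tendstoAE ?_
  filter_upwards [ae_all_iff.2 fun j => AEEqFun.coeFn_le.2 (hu (Nat.le_succ j)),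
    ae_all_iff.2 fun j => AEEqFun.coeFn_le.2 (hb (mem_range_self j))] with x hux hbx
  exact ⟨_, tendsto_atTop_ciInf (antitone_nat_of_succ_le hux)
    ⟨b x, forall_mem_range.2 hbx⟩⟩

theorem exists_tendstoAE_of_abs_sub_le {u a : ℕ → L0 μ}
    (hua : ∀ i j, |u i - u j| ≤ a i + a j) (ha : TendstoAE a 0) : ∃ f, TendstoAE u f := by
  refine exists_tendstoAE ?_
  filter_upwards [ha, ae_all_iff.2 fun i => ae_all_iff.2 fun j => AEEqFun.coeFn_le.2 (hua i j),
    ae_all_iff.2 fun i => ae_all_iff.2 fun j => AEEqFun.coeFn_abs (u i - u j),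
    ae_all_iff.2 fun i => ae_all_iff.2 fun j => AEEqFun.coeFn_sub (u i) (u j),
    ae_all_iff.2 fun i => ae_all_iff.2 fun j => AEEqFun.coeFn_add (a i) (a j),
    AEEqFun.coeFn_zero (μ := μ) (β := ℝ)] with x hax hle habs hsub hadd h0
  simp only [habs, hsub, hadd, Pi.sub_apply, Pi.add_apply] at hle
  rw [h0, Pi.zero_apply] at hax
  have hlim : Tendsto (fun q : ℕ × ℕ => a q.1 x + a q.2 x) (atTop ×ˢ atTop) (nhds 0) := by
    simpa using (hax.comp tendsto_fst).add (hax.comp tendsto_snd)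
  rw [prod_atTop_atTop_eq] at hlim
  exact cauchySeq_tendsto_of_complete <| cauchySeq_iff_tendsto_dist_atTop_0.2 <|
    _root_.squeeze_zero (fun _ => dist_nonneg) (fun q => hle q.1 q.2) hlim

end L0

theorem exists_antitone_le_of_directedOn {α : Type*} [Preorder α] {S : Set α}
    (hS : DirectedOn (· ≥ ·) S) {s : ℕ → α} (hs : ∀ j, s j ∈ S) :
    ∃ u : ℕ → α, Antitone u ∧ (∀ j, u j ∈ S) ∧ ∀ j, u j ≤ s j := by
  choose! r hrS hr using hS
  let u : ℕ → α := Nat.rec (s 0) fun j t => r t (s (j + 1))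
  have huS : ∀ j, u j ∈ S := fun j => by
    induction j with
    | zero => exact hs 0
    | succ j ih => exact hrS _ ih _ (hs _)
  refine ⟨u, antitone_nat_of_succ_le fun j => (hr _ (huS j) _ (hs _)).1, huS, fun j => ?_⟩
  cases j with
  | zero => exact le_rfl
  | succ j => exact (hr _ (huS j) _ (hs _)).2

section ArctanIntegral

variable (μ : Measure X) [SFinite μ]

/-- The integral of `arctan ∘ f` against the finite measure `μ.toFinite`: a strictly monotone
real-valued functional on `L⁰(𝕏)`, continuous under almost everywhere convergence, which turns
essential infima into infima of real numbers. -/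
def arctanIntegral (f : L0 μ) : ℝ :=
  ∫ x, Real.arctan (f x) ∂μ.toFinite

variable {μ}

theorem integrable_arctan (f : L0 μ) : Integrable (fun x => Real.arctan (f x)) μ.toFinite :=
  .of_bound f.measurable.arctan.aestronglyMeasurable (Real.pi / 2) <| .of_forall fun _ =>
    abs_le.2 ⟨(Real.neg_pi_div_two_lt_arctan _).le, (Real.arctan_lt_pi_div_two _).le⟩

theorem arctanIntegral_strictMono : StrictMono (arctanIntegral μ) := by
  intro f g hfg
  have hle : ∀ᵐ x ∂μ.toFinite, Real.arctan (f x) ≤ Real.arctan (g x) := by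
    filter_upwards [ae_toFinite (μ := μ) ▸ AEEqFun.coeFn_le.2 hfg.le] with x hx
      using Real.arctan_mono hx
  refine (integral_mono_ae (integrable_arctan f) (integrable_arctan g) hle).lt_of_ne fun heq => ?_
  have hae := (integral_eq_iff_of_ae_le (integrable_arctan f) (integrable_arctan g) hle).1 heq
  rw [ae_toFinite] at hae
  exact hfg.ne (AEEqFun.ext (hae.mono fun _ hx => Real.arctan_injective hx))

theorem TendstoAE.arctanIntegral {u : ℕ → L0 μ} {f : L0 μ} (hu : TendstoAE u f) :
    Tendsto (fun j => arctanIntegral μ (u j)) atTop (nhds (arctanIntegral μ f)) := by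
  refine tendsto_integral_of_dominated_convergence (fun _ => Real.pi / 2)
    (fun j => (integrable_arctan (u j)).aestronglyMeasurable) (integrable_const _)
    (fun j => .of_forall fun x => ?_) ?_
  · exact abs_le.2 ⟨(Real.neg_pi_div_two_lt_arctan _).le, (Real.arctan_lt_pi_div_two _).le⟩
  · rw [ae_toFinite]
    filter_upwards [hu] with x hx using (Real.continuous_arctan.tendsto _).comp hx

end ArctanIntegral

namespace L0

variable {μ : Measure X} [SFinite μ]

theorem exists_tendstoAE_isGLB {S : Set (L0 μ)} (hne : S.Nonempty)
    (hdir : DirectedOn (· ≥ ·) S) (hb : BddBelow S) :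
    ∃ u : ℕ → L0 μ, (∀ j, u j ∈ S) ∧ ∃ d, TendstoAE u d ∧ IsGLB S d := by
  have hmono : Monotone (arctanIntegral μ) := arctanIntegral_strictMono.monotone
  have hinf : ∀ f ∈ S, sInf (arctanIntegral μ '' S) ≤ arctanIntegral μ f := fun f hf =>
    csInf_le (hmono.map_bddBelow hb) (mem_image_of_mem _ hf)
  obtain ⟨t, -, ht, htS⟩ :=
    exists_seq_tendsto_sInf (hne.image (arctanIntegral μ)) (hmono.map_bddBelow hb)
  choose s hsS hst using htS
  obtain ⟨u, hu, huS, hus⟩ := exists_antitone_le_of_directedOn hdir hsS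
  obtain ⟨d, hd⟩ := exists_tendstoAE_of_antitone hu (hb.mono (range_subset_iff.2 huS))
  have hmin : arctanIntegral μ d = sInf (arctanIntegral μ '' S) :=
    tendsto_nhds_unique hd.arctanIntegral <| tendsto_of_tendsto_of_tendsto_of_le_of_le
      tendsto_const_nhds ht (fun j => hinf _ (huS j)) fun j => (hmono (hus j)).trans_eq (hst j)
  refine ⟨u, huS, d, hd, fun f hf => ?_, fun b hb => hd.le_of_forall_le fun j => hb (huS j)⟩
  have hle : arctanIntegral μ d ≤ arctanIntegral μ (f ⊓ d) := by
    refine ge_of_tendsto' ((TendstoAE.const f).inf hd).arctanIntegral fun j => ?_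
    obtain ⟨v, hvS, hvf, hvu⟩ := hdir f hf (u j) (huS j)
    exact hmin.trans_le ((hinf v hvS).trans (hmono (le_inf hvf hvu)))
  have heq : f ⊓ d = d :=
    inf_le_right.eq_of_not_lt fun hlt => (arctanIntegral_strictMono hlt).not_ge hle
  exact inf_eq_right.1 heq

theorem ofReal_dL0 (f g : L0 μ) :
    ENNReal.ofReal (dL0 μ f g) = eLpNorm (fun x => min |f x - g x| 1) 1 μ.toFinite := by
  have h0 : ∀ x, 0 ≤ min |f x - g x| 1 := fun x => le_min (abs_nonneg _) zero_le_one
  have hi : Integrable (fun x => min |f x - g x| 1) μ.toFinite :=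
    .of_bound ((f.measurable.sub g.measurable).abs.min measurable_const).aestronglyMeasurable 1 <|
      .of_forall fun x => (Real.norm_of_nonneg (h0 x)).trans_le (min_le_right _ _)
  rw [eLpNorm_one_eq_lintegral_enorm, ← ofReal_integral_norm_eq_lintegral_enorm hi]
  simp only [Real.norm_of_nonneg (h0 _), dL0]

theorem exists_tendstoAE_of_tendsto_dL0 {u : ℕ → L0 μ} {f : L0 μ}
    (hu : Tendsto (fun j => dL0 μ (u j) f) atTop (nhds 0)) :
    ∃ ns : ℕ → ℕ, StrictMono ns ∧ TendstoAE (fun j => u (ns j)) f := by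
  have hmeas : TendstoInMeasure μ.toFinite (fun j x => min |u j x - f x| 1) atTop 0 := by
    refine tendstoInMeasure_of_tendsto_eLpNorm one_ne_zero (fun j =>
      (((u j).measurable.sub f.measurable).abs.min measurable_const).aestronglyMeasurable)
      aestronglyMeasurable_zero ?_
    simpa only [sub_zero, ofReal_dL0, ENNReal.ofReal_zero] using ENNReal.tendsto_ofReal hu
  obtain ⟨ns, hns, hlim⟩ := hmeas.exists_seq_tendsto_ae
  rw [ae_toFinite] at hlim
  refine ⟨ns, hns, ?_⟩
  filter_upwards [hlim] with x hx
  refine tendsto_iff_dist_tendsto_zero.2 (hx.congr' ?_)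
  filter_upwards [hx.eventually_lt_const zero_lt_one] with j hj
  exact min_eq_left ((min_lt_iff.1 hj).resolve_right (lt_irrefl 1)).le

end L0

/-- A pointwise seminorm on an `L⁰(𝕏)`-module: the pointwise norm of a Banach `L⁰(𝕏)`-module
without its definiteness and completeness. For an `L⁰(𝕏)`-linear map `T` into a module with a
pointwise seminorm, `v ↦ |T v|` is again one, so that boundedness of operators becomes comparison
of seminorms. -/
structure PointwiseSeminorm (μ : Measure X) (M : Type*) [AddCommGroup M] [Module (L0 μ) M] where
  toFun : M → L0 μ
  add_le' : ∀ v w, toFun (v + w) ≤ toFun v + toFun w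
  smul' : ∀ (f : L0 μ) v, toFun (f • v) = |f| * toFun v

namespace PointwiseSeminorm

variable {μ : Measure X} {M : Type*} [AddCommGroup M] [Module (L0 μ) M]

instance : FunLike (PointwiseSeminorm μ M) M (L0 μ) where
  coe := toFun
  coe_injective p q h := by cases p; cases q; congr

theorem map_smul_eq (p : PointwiseSeminorm μ M) (f : L0 μ) (v : M) : p (f • v) = |f| * p v :=
  p.smul' f v

instance : AddGroupSeminormClass (PointwiseSeminorm μ M) M (L0 μ) where
  map_add_le_add p := p.add_le'
  map_zero p := by simpa using p.map_smul_eq 0 0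
  map_neg_eq_map p v := by
    simpa [abs_of_nonneg (zero_le_one' (L0 μ))] using p.map_smul_eq (-1) v

theorem nonneg (p : PointwiseSeminorm μ M) (v : M) : 0 ≤ p v :=
  nsmul_two_semiclosed <| calc
    0 = p (v - v) := by rw [sub_self, map_zero p]
    _ ≤ p v + p v := map_sub_le_add p v v
    _ = 2 • p v := (two_nsmul _).symm

/-- The kernel `{v | q v = 0}` of a pointwise seminorm. -/
def ker (q : PointwiseSeminorm μ M) : Submodule (L0 μ) M where
  carrier := {v | q v = 0}
  zero_mem' := map_zero q
  add_mem' {v w} hv hw :=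
    ((map_add_le_add q v w).trans_eq (by rw [hv, hw, add_zero])).antisymm (q.nonneg _)
  smul_mem' f v hv := (q.map_smul_eq f v).trans (by rw [show q v = 0 from hv, mul_zero])

/-- The submodule `N` is closed under `q (u j - v) → 0` almost everywhere. As sequences converging
for the distance induced by `q` have subsequences converging in this sense, this is closedness for
that distance, in a form accessible to pointwise arguments. -/
def IsAEClosed (q : PointwiseSeminorm μ M) (N : Submodule (L0 μ) M) : Prop :=
  ∀ (u : ℕ → M) (v : M), (∀ j, u j ∈ N) → TendstoAE (fun j => q (u j - v)) 0 → v ∈ N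

/-- The seminorm `p` is dominated by `q` on the submodule `N`, with a factor in `L⁰(𝕏)⁺`. -/
def IsBoundedOn (p q : PointwiseSeminorm μ M) (N : Submodule (L0 μ) M) : Prop :=
  ∃ g : L0 μ, 0 ≤ g ∧ ∀ v ∈ N, p v ≤ g * q v

variable {p q : PointwiseSeminorm μ M} {N : Submodule (L0 μ) M}

theorem isAEClosed_ker : q.IsAEClosed q.ker := fun u v hu hv => by
  refine (hv.le_of_forall_le fun j => ?_).antisymm (q.nonneg v)
  calc q v = q (u j - (u j - v)) := by rw [sub_sub_cancel]
    _ ≤ q (u j) + q (u j - v) := map_sub_le_add q _ _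
    _ = q (u j - v) := by rw [show q (u j) = 0 from hu j, zero_add]

theorem exists_mem_map_sub_le_inf {n n' : M} (hn : n ∈ N) (hn' : n' ∈ N) (w : M) :
    ∃ m ∈ N, q (m - w) ≤ q (n - w) ⊓ q (n' - w) := by
  obtain ⟨a, ha0, ha1, ha⟩ := L0.exists_mul_add_one_sub_mul_eq_inf (q (n - w)) (q (n' - w))
  refine ⟨a • n + (1 - a) • n', N.add_mem (N.smul_mem _ hn) (N.smul_mem _ hn'), ?_⟩
  calc q (a • n + (1 - a) • n' - w)
      = q (a • (n - w) + (1 - a) • (n' - w)) := by congr 1; module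
    _ ≤ q (a • (n - w)) + q ((1 - a) • (n' - w)) := map_add_le_add q _ _
    _ = a * q (n - w) + (1 - a) * q (n' - w) := by
      rw [q.map_smul_eq, q.map_smul_eq, abs_of_nonneg ha0, abs_of_nonneg (sub_nonneg.2 ha1)]
    _ = q (n - w) ⊓ q (n' - w) := ha

theorem abs_mul_le_map_add_smul {d : L0 μ} {w n : M} (hd : ∀ n ∈ N, d ≤ q (n - w)) (hn : n ∈ N)
    (f : L0 μ) : |f| * d ≤ q (n + f • w) := by
  obtain ⟨k, hk, hk0, hk1⟩ := L0.exists_mul_mul_self_eq f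
  calc |f| * d ≤ |f| * q (-(k • n) - w) := by
        gcongr
        exact hd _ (N.neg_mem (N.smul_mem k hn))
    _ = q (f • (-(k • n) - w)) := (q.map_smul_eq _ _).symm
    _ = q (-((f * k) • (n + f • w))) := by
      rw [smul_add, smul_smul, hk]; congr 1; module
    _ = |f * k| * q (n + f • w) := by rw [map_neg_eq_map, q.map_smul_eq]
    _ ≤ 1 * q (n + f • w) := by
      rw [abs_of_nonneg hk0]
      exact mul_le_mul_of_nonneg_right hk1 (q.nonneg _)
    _ = q (n + f • w) := one_mul _

section SFinite

variable [SFinite μ]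

theorem exists_tendstoAE_isGLB_map_sub (q : PointwiseSeminorm μ M) (N : Submodule (L0 μ) M)
    (w : M) : ∃ u : ℕ → M, (∀ j, u j ∈ N) ∧
      ∃ d, TendstoAE (fun j => q (u j - w)) d ∧ IsGLB ((fun n => q (n - w)) '' N) d := by
  have hdir : DirectedOn (· ≥ ·) ((fun n => q (n - w)) '' N) := by
    rintro _ ⟨n, hn, rfl⟩ _ ⟨n', hn', rfl⟩
    obtain ⟨m, hm, hle⟩ := exists_mem_map_sub_le_inf hn hn' w
    exact ⟨_, mem_image_of_mem _ hm, hle.trans inf_le_left, hle.trans inf_le_right⟩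
  obtain ⟨r, hr, hd⟩ := L0.exists_tendstoAE_isGLB (Nonempty.image _ ⟨0, N.zero_mem⟩) hdir
    ⟨0, forall_mem_image.2 fun n _ => q.nonneg _⟩
  choose u hu hur using hr
  obtain rfl : (fun j => q (u j - w)) = r := funext hur
  exact ⟨u, hu, hd⟩

theorem IsAEClosed.exists_le_map_sub (hN : q.IsAEClosed N) (w : M) :
    ∃ d : L0 μ, 0 ≤ d ∧ (∀ n ∈ N, d ≤ q (n - w)) ∧ ∀ f : L0 μ, f * d = 0 → f • w ∈ N := by
  obtain ⟨u, hu, d, hud, hd⟩ := q.exists_tendstoAE_isGLB_map_sub N w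
  have hd0 : 0 ≤ d := hd.2 (forall_mem_image.2 fun n _ => q.nonneg _)
  refine ⟨d, hd0, fun n hn => hd.1 (mem_image_of_mem _ hn), fun f hf => ?_⟩
  have hlim : TendstoAE (fun j => |f| * q (u j - w)) (|f| * d) := (TendstoAE.const |f|).mul hud
  refine hN (fun j => f • u j) _ (fun j => N.smul_mem _ (hu j)) ?_
  rw [← abs_of_nonneg hd0, ← L0.abs_mul, hf, abs_zero] at hlim
  simpa only [← q.map_smul_eq, smul_sub] using hlim

theorem IsAEClosed.exists_ideal_coeff_bound (hN : q.IsAEClosed N) (w : M) :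
    ∃ (I : Ideal (L0 μ)) (h : L0 μ), 0 ≤ h ∧
      (∀ v ∈ N ⊔ Submodule.span (L0 μ) {w}, ∃ n ∈ N, ∃ f ∈ I, n + f • w = v) ∧
      ∀ n ∈ N, ∀ f ∈ I, |f| ≤ h * q (n + f • w) := by
  obtain ⟨d, hd0, hd, hann⟩ := hN.exists_le_map_sub w
  obtain ⟨k, hk, -, -⟩ := L0.exists_mul_mul_self_eq d
  refine ⟨Ideal.span {d}, |k|, abs_nonneg k, fun v hv => ?_, fun n hn f hf => ?_⟩
  · obtain ⟨n, hn, _, ha, rfl⟩ := Submodule.mem_sup.1 hv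
    obtain ⟨a, rfl⟩ := Submodule.mem_span_singleton.1 ha
    have hres : (a * (1 - d * k)) • w ∈ N := hann _ (by linear_combination (-a) * hk)
    refine ⟨n + (a * (1 - d * k)) • w, N.add_mem hn hres, a * k * d,
      Ideal.mem_span_singleton.2 (dvd_mul_left _ _), by module⟩
  · obtain ⟨c, rfl⟩ := Ideal.mem_span_singleton.1 hf
    calc |d * c| = |k| * (|d * c| * d) := by
          rw [← abs_of_nonneg hd0, ← L0.abs_mul, ← L0.abs_mul, abs_of_nonneg hd0]
          congr 1
          linear_combination (-c) * hk
      _ ≤ |k| * q (n + (d * c) • w) := by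
          gcongr
          exact abs_mul_le_map_add_smul hd hn _

theorem IsAEClosed.sup_span_singleton (hN : q.IsAEClosed N) (w : M) :
    q.IsAEClosed (N ⊔ Submodule.span (L0 μ) {w}) := by
  intro z v hz hv
  obtain ⟨I, h, hh, hdec, hI⟩ := hN.exists_ideal_coeff_bound w
  choose n hn f hf hnf using fun j => hdec (z j) (hz j)
  have hcauchy : ∀ i j, |f i - f j| ≤ h * q (z i - v) + h * q (z j - v) := fun i j => calc
    |f i - f j| ≤ h * q ((n i - n j) + (f i - f j) • w) :=
      hI _ (N.sub_mem (hn i) (hn j)) _ (I.sub_mem (hf i) (hf j))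
    _ = h * q ((z i - v) - (z j - v)) := by
      rw [← hnf i, ← hnf j]; congr 2; module
    _ ≤ h * (q (z i - v) + q (z j - v)) := by
      gcongr
      exact map_sub_le_add q _ _
    _ = h * q (z i - v) + h * q (z j - v) := mul_add _ _ _
  obtain ⟨F, hF⟩ := L0.exists_tendstoAE_of_abs_sub_le hcauchy <| by
    simpa only [mul_zero] using (TendstoAE.const h).mul hv
  have hmem : v - F • w ∈ N := by
    refine hN n _ hn (TendstoAE.squeeze_zero (v := fun j => q (z j - v) + |f j - F| * q w)
      (fun j => q.nonneg _) (fun j => ?_) ?_)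
    · calc q (n j - (v - F • w)) = q ((z j - v) - (f j - F) • w) := by
            rw [← hnf j]; congr 1; module
        _ ≤ q (z j - v) + q ((f j - F) • w) := map_sub_le_add q _ _
        _ = q (z j - v) + |f j - F| * q w := by rw [q.map_smul_eq]
    · simpa only [zero_mul, add_zero] using hv.add (hF.abs_sub.mul (TendstoAE.const (q w)))
  exact Submodule.mem_sup.2
    ⟨_, hmem, _, Submodule.smul_mem _ F (Submodule.mem_span_singleton_self w), sub_add_cancel _ _⟩

theorem IsBoundedOn.sup_span_singleton (hp : p.IsBoundedOn q N) (hN : q.IsAEClosed N) (w : M) :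
    p.IsBoundedOn q (N ⊔ Submodule.span (L0 μ) {w}) := by
  obtain ⟨g, hg0, hg⟩ := hp
  obtain ⟨I, h, hh, hdec, hI⟩ := hN.exists_ideal_coeff_bound w
  have hc : 0 ≤ g * q w + p w := add_nonneg (mul_nonneg hg0 (q.nonneg w)) (p.nonneg w)
  refine ⟨g + h * (g * q w + p w), add_nonneg hg0 (mul_nonneg hh hc), fun v hv => ?_⟩
  obtain ⟨n, hn, f, hf, hv⟩ := hdec v hv
  calc p v ≤ p n + p (f • w) := hv ▸ map_add_le_add p n (f • w)
    _ ≤ g * q n + |f| * p w := by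
      rw [p.map_smul_eq]
      gcongr
      exact hg n hn
    _ ≤ g * (q v + |f| * q w) + |f| * p w := by
      gcongr
      rw [← q.map_smul_eq, eq_sub_of_add_eq hv]
      exact map_sub_le_add q _ _
    _ = g * q v + |f| * (g * q w + p w) := by ring
    _ ≤ g * q v + h * q v * (g * q w + p w) := by
      gcongr
      exact hv ▸ hI n hn f hf
    _ = (g + h * (g * q w + p w)) * q v := by ring

theorem isAEClosed_and_isBoundedOn_sup_of_fg {P : Submodule (L0 μ) M} (hP : P.FG)
    (hN : q.IsAEClosed N) (hp : p.IsBoundedOn q N) :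
    q.IsAEClosed (N ⊔ P) ∧ p.IsBoundedOn q (N ⊔ P) := by
  induction P, hP using Submodule.fg_induction generalizing N with
  | singleton w => exact ⟨hN.sup_span_singleton w, hp.sup_span_singleton hN w⟩
  | sup P₁ P₂ _ _ ih₁ ih₂ =>
    rw [← sup_assoc]
    exact ih₂ (ih₁ hN hp).1 (ih₁ hN hp).2

theorem IsAEClosed.eq_top_of_dense (hN : q.IsAEClosed N)
    (hdense : ∀ v, ∀ ε : ℝ, 0 < ε → ∃ w ∈ N, dL0 μ (q (w - v)) 0 < ε) : N = ⊤ := by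
  refine Submodule.eq_top_iff'.2 fun v => ?_
  choose u huN hu using fun j : ℕ => hdense v (1 / ((j : ℝ) + 1)) (by positivity)
  have hlim : Tendsto (fun j => dL0 μ (q (u j - v)) 0) atTop (nhds 0) :=
    squeeze_zero (fun _ => integral_nonneg fun _ => le_min (abs_nonneg _) zero_le_one)
      (fun j => (hu j).le) tendsto_one_div_add_atTop_nhds_zero_nat
  obtain ⟨ns, -, hns⟩ := L0.exists_tendstoAE_of_tendsto_dL0 hlim
  exact hN _ v (fun j => huN (ns j)) hns

end SFinite

/-- The pointwise norm of a Banach `L⁰(𝕏)`-module as a pointwise seminorm. -/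
def ofBanachMod (μ : Measure X) [SFinite μ] (M : Type*) [AddCommGroup M] [Module (L0 μ) M]
    [BanachMod μ M] : PointwiseSeminorm μ M where
  toFun := pn μ
  add_le' := BanachMod.pn_add_le
  smul' := BanachMod.pn_smul

/-- The pointwise seminorm `v ↦ |T v|` of an `L⁰(𝕏)`-linear functional `T`. -/
def ofLinearMap (T : M →ₗ[L0 μ] L0 μ) : PointwiseSeminorm μ M where
  toFun v := |T v|
  add_le' v w := by rw [map_add]; exact abs_add_le _ _
  smul' f v := by rw [map_smul, smul_eq_mul, L0.abs_mul]

end PointwiseSeminorm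

theorem fin_gen_automatic_continuity_general {μ : Measure X} [SFinite μ] {M : Type*}
    [AddCommGroup M] [Module (L0 μ) M] {p q : PointwiseSeminorm μ M}
    (hpq : ∀ v, q v = 0 → p v = 0) {N : Submodule (L0 μ) M} (hN : N.FG)
    (hdense : ∀ v, ∀ ε : ℝ, 0 < ε → ∃ w ∈ N, dL0 μ (q (w - v)) 0 < ε) :
    ∃ g : L0 μ, 0 ≤ g ∧ ∀ v, p v ≤ g * q v := by
  have hker : p.IsBoundedOn q q.ker := ⟨0, le_rfl, fun v hv => by rw [hpq v hv, zero_mul]⟩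
  obtain ⟨hclosed, g, hg0, hg⟩ :=
    PointwiseSeminorm.isAEClosed_and_isBoundedOn_sup_of_fg hN PointwiseSeminorm.isAEClosed_ker hker
  have htop : q.ker ⊔ N = ⊤ := hclosed.eq_top_of_dense fun v ε hε =>
    (hdense v ε hε).imp fun _ hw => ⟨Submodule.mem_sup_right hw.1, hw.2⟩
  exact ⟨g, hg0, fun v => hg v (htop ▸ Submodule.mem_top)⟩

/-- Let `𝕏` be a σ-finite measure space and `ℳ` a finitely-generated Banach
`L⁰(𝕏)`-module. Then every `L⁰(𝕏)`-linear operator `T : ℳ → L⁰(𝕏)` is automatically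
continuous, i.e. `T ∈ ℳ*`: there exists `g ∈ L⁰(𝕏)⁺` such that `|T v| ≤ g |v|` for all
`v ∈ ℳ`. -/
theorem fin_gen_automatic_continuity
    (μ : Measure X) [SigmaFinite μ]
    (M : Type*) [AddCommGroup M] [Module (L0 μ) M] [BanachMod μ M]
    (hfg : FinitelyGenerated μ M) (T : M →ₗ[L0 μ] L0 μ) :
    ∃ g : L0 μ, 0 ≤ g ∧ ∀ v : M, |T v| ≤ g * pn μ v := by
  obtain ⟨s, hs⟩ := hfg
  have hker : ∀ v,
      PointwiseSeminorm.ofBanachMod μ M v = 0 → PointwiseSeminorm.ofLinearMap T v = 0 :=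
    fun v hv => by rw [(BanachMod.pn_eq_zero v).1 hv, map_zero]
  exact fin_gen_automatic_continuity_general hker ⟨s, rfl⟩ hs

end Paper
end
end

section
/- Let 𝕏 be a σ-finite measure space and ℳ a Banach L^0(𝕏)-module. A family {v_i}_{i∈I} ⊆ ℳ is summable if and only if ⋀_{F ∈ 𝒫_f(I)} ⋁_{G ∈ 𝒫_f(I∖F)} |Σ_{i∈G} v_i| = 0. In this case the set J := {i ∈ I : v_i ≠ 0} is at most countable and, for every increasing sequence (F_n)_{n∈ℕ} of finite subsets of J with ⋃_n F_n = J, the partial sums Σ_{i∈F_n} v_i converge to Σ_{i∈I} v_i in ℳ as n → ∞. -/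
/-!
In `L⁰(𝕏)` infima are attained along sequences: a set bounded below has a countable subset with
the same infimum, because `f ↦ ∫ arctan f` against a finite measure equivalent to `μ` is strictly
increasing, so an infimum of a countable subset that minimizes this integral cannot be lowered
further. Countable infima are computed pointwise, hence a sequence decreasing to `0` tends to `0`
in `L⁰(𝕏)` by dominated convergence.

Consequently both conditions are statements about a net `b ↓ 0` indexed by finite sets, and the
inner suprema disappear: the sum is `s` iff `|s - ∑_{i ∈ F} v_i| ≤ b F`, and the Cauchy condition
holds iff `|∑_{i ∈ G} v_i| ≤ b F` for all `G` disjoint from `F`. The triangle inequality through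
`s` turns the former into the latter, with `b + b` in place of `b`. Conversely, along a sequence
with `b (H n) ↓ 0` the partial sums converge by completeness, and their limit is the sum. An index
outside every `H n` has `|v_i| ≤ b (H n)` for all `n`, so `v_i = 0`.
-/

open MeasureTheory Filter Set TensorProduct

noncomputable section

namespace Paper

variable {X : Type*} [MeasurableSpace X]

/-- The sets `{ |∑_{i ∈ G} v_i| : G finite, G ∩ F = ∅ }` appearing in the Cauchy summability
criterion. -/
def cauchyUB (μ : Measure X) [SFinite μ] {M : Type*} [AddCommGroup M] [Module (L0 μ) M]
    [BanachMod μ M] {I : Type*} (v : I → M) (F : Finset I) : Set (L0 μ) :=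
  {g | ∃ G : Finset I, Disjoint G F ∧ g = pn μ (∑ i ∈ G, v i)}

/-! ### The order of `L⁰(𝕏)` -/

instance aeEqFun_isOrderedAddMonoid {μ : Measure X} {β : Type*} [TopologicalSpace β]
    [AddCommMonoid β] [ContinuousAdd β] [PartialOrder β] [IsOrderedAddMonoid β] :
    IsOrderedAddMonoid (X →ₘ[μ] β) where
  add_le_add_left f g hfg h := by
    rw [← AEEqFun.coeFn_le] at hfg ⊢
    filter_upwards [hfg, AEEqFun.coeFn_add f h, AEEqFun.coeFn_add g h] with x hx hfx hgx
    rw [hfx, hgx]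
    exact add_le_add_left hx _

section CountableInfima

variable {μ : Measure X} {β ι : Type*} [TopologicalSpace β] [Countable ι]

lemma isGLB_range_of_ae_isGLB [Preorder β] {u : ι → X →ₘ[μ] β} {b : X →ₘ[μ] β}
    (h : ∀ᵐ x ∂μ, IsGLB (range fun i => u i x) (b x)) : IsGLB (range u) b := by
  constructor
  · rintro _ ⟨i, rfl⟩
    exact AEEqFun.coeFn_le.1 (h.mono fun x hx => hx.1 ⟨i, rfl⟩)
  · intro g hg
    have hgu : ∀ᵐ x ∂μ, ∀ i, g x ≤ u i x :=
      ae_all_iff.2 fun i => AEEqFun.coeFn_le.2 (hg ⟨i, rfl⟩)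
    rw [← AEEqFun.coeFn_le]
    filter_upwards [h, hgu] with x hx hgx
    exact hx.2 (forall_mem_range.2 hgx)

variable [ConditionallyCompleteLinearOrder β] [OrderTopology β] [SecondCountableTopology β]
  [Nonempty ι] {u : ι → X →ₘ[μ] β}

lemma exists_ae_isGLB_of_bddBelow (hu : BddBelow (range u)) :
    ∃ b : X →ₘ[μ] β, ∀ᵐ x ∂μ, IsGLB (range fun i => u i x) (b x) := by
  borelize β
  obtain ⟨g, hg⟩ := hu
  have hgu : ∀ᵐ x ∂μ, ∀ i, g x ≤ u i x :=
    ae_all_iff.2 fun i => AEEqFun.coeFn_le.2 (hg ⟨i, rfl⟩)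
  have hmeas : Measurable fun x => ⨅ i, u i x := .iInf fun i => (u i).measurable
  refine ⟨AEEqFun.mk _ hmeas.aestronglyMeasurable, ?_⟩
  filter_upwards [AEEqFun.coeFn_mk _ hmeas.aestronglyMeasurable, hgu] with x hx hgx
  rw [hx]
  exact isGLB_ciInf ⟨g x, forall_mem_range.2 hgx⟩

lemma isGLB_range_iff_ae_isGLB {b : X →ₘ[μ] β} :
    IsGLB (range u) b ↔ ∀ᵐ x ∂μ, IsGLB (range fun i => u i x) (b x) := by
  refine ⟨fun h => ?_, isGLB_range_of_ae_isGLB⟩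
  obtain ⟨c, hc⟩ := exists_ae_isGLB_of_bddBelow h.bddBelow
  rwa [h.unique (isGLB_range_of_ae_isGLB hc)]

end CountableInfima

lemma strictMono_integral_arctan (μ : Measure X) [SFinite μ] :
    StrictMono fun f : L0 μ => ∫ x, Real.arctan (f x) ∂μ.toFinite := by
  have hInt (f : L0 μ) : Integrable (fun x => Real.arctan (f x)) μ.toFinite :=
    .of_bound (Real.measurable_arctan.comp f.measurable).aestronglyMeasurable (Real.pi / 2)
      (.of_forall fun x => abs_le.2
        ⟨(Real.neg_pi_div_two_lt_arctan _).le, (Real.arctan_lt_pi_div_two _).le⟩)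
  intro f g hfg
  have hle : (fun x => Real.arctan (f x)) ≤ᵐ[μ.toFinite] fun x => Real.arctan (g x) := by
    rw [EventuallyLE, ae_toFinite]
    exact (AEEqFun.coeFn_le.2 hfg.le).mono fun x hx => Real.arctan_mono hx
  refine (integral_mono_ae (hInt f) (hInt g) hle).lt_of_ne fun heq => hfg.ne (AEEqFun.ext ?_)
  have hae := (integral_eq_iff_of_ae_le (hInt f) (hInt g) hle).1 heq
  rw [EventuallyEq, ae_toFinite] at hae
  exact hae.mono fun x hx => Real.arctan_injective hx

/- Choose countable subsets `T n` of `S` along which `φ (⋀ T n)` tends to the infimum of `φ (⋀ T)`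
over all `T`; their union minimizes `φ`, so adjoining a further element of `S` leaves its infimum
unchanged. -/
lemma exists_countable_subset_isGLB {P : Type*} [PartialOrder P] {φ : P → ℝ} (hφ : StrictMono φ)
    (hP : ∀ T : Set P, T.Countable → T.Nonempty → BddBelow T → ∃ b, IsGLB T b)
    {S : Set P} (hne : S.Nonempty) (hbdd : BddBelow S) :
    ∃ T ⊆ S, T.Countable ∧ T.Nonempty ∧ ∃ b, IsGLB T b ∧ IsGLB S b := by
  let V : Set ℝ := {r | ∃ T ⊆ S, T.Countable ∧ T.Nonempty ∧ ∃ b, IsGLB T b ∧ φ b = r}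
  have hV_ne : V.Nonempty := by
    obtain ⟨f, hf⟩ := hne
    exact ⟨φ f, {f}, singleton_subset_iff.2 hf, countable_singleton f, singleton_nonempty f, f,
      isGLB_singleton, rfl⟩
  have hV_bdd : BddBelow V := by
    obtain ⟨l, hl⟩ := hbdd
    refine ⟨φ l, ?_⟩
    rintro _ ⟨T, hTS, -, -, b, hb, rfl⟩
    exact hφ.monotone (hb.2 (lowerBounds_mono_set hTS hl))
  obtain ⟨r, -, hr, hrV⟩ := exists_seq_tendsto_sInf hV_ne hV_bdd
  choose T hTS hTc hTne a ha hφa using hrV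
  have hUS : ⋃ n, T n ⊆ S := iUnion_subset hTS
  have hUc : (⋃ n, T n).Countable := countable_iUnion hTc
  have hUne : (⋃ n, T n).Nonempty := (hTne 0).mono (subset_iUnion T 0)
  obtain ⟨b, hb⟩ := hP _ hUc hUne (hbdd.mono hUS)
  have hb_min : φ b ≤ sInf V := ge_of_tendsto' hr fun n =>
    (hφ.monotone ((ha n).mono hb (subset_iUnion T n))).trans_eq (hφa n)
  refine ⟨_, hUS, hUc, hUne, b, hb, fun f hf => ?_,
    fun g hg => hb.2 (lowerBounds_mono_set hUS hg)⟩
  have hinsS : insert f (⋃ n, T n) ⊆ S := insert_subset hf hUS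
  obtain ⟨c, hc⟩ := hP _ (hUc.insert f) (insert_nonempty f _) (hbdd.mono hinsS)
  have hcb : c ≤ b := hb.mono hc (subset_insert f _)
  have hφbc : φ b ≤ φ c :=
    hb_min.trans (csInf_le hV_bdd ⟨_, hinsS, hUc.insert f, insert_nonempty f _, c, hc, rfl⟩)
  obtain rfl : c = b := hcb.eq_of_not_lt fun hlt => (hφ hlt).not_ge hφbc
  exact hc.1 (mem_insert f _)

section Completeness

variable {μ : Measure X} [SFinite μ] {S : Set (L0 μ)}

lemma L0.exists_countable_subset_isGLB (hne : S.Nonempty) (hbdd : BddBelow S) :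
    ∃ T ⊆ S, T.Countable ∧ T.Nonempty ∧ ∃ b, IsGLB T b ∧ IsGLB S b := by
  refine Paper.exists_countable_subset_isGLB (strictMono_integral_arctan μ)
    (fun T hTc hTne hT => ?_) hne hbdd
  obtain ⟨u, rfl⟩ := hTc.exists_eq_range hTne
  exact (exists_ae_isGLB_of_bddBelow hT).imp fun b => isGLB_range_of_ae_isGLB

lemma L0.exists_isLUB (hne : S.Nonempty) (hbdd : BddAbove S) : ∃ b, IsLUB S b := by
  obtain ⟨-, -, -, -, b, -, hb⟩ :=
    L0.exists_countable_subset_isGLB hbdd (hne.mono (subset_lowerBounds_upperBounds S))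
  exact ⟨b, isGLB_upperBounds.1 hb⟩

end Completeness

/-! ### Nets decreasing to zero -/

/-- `b ↓ 0`: the net `b` is decreasing with infimum `0`. Order convergence of a net to a limit
means that its distance to the limit is dominated by such a `b`. -/
structure DecreasesToZero {ι P : Type*} [Preorder ι] [Preorder P] [Zero P] (b : ι → P) : Prop where
  antitone : Antitone b
  isGLB : IsGLB (range b) 0

namespace DecreasesToZero

open scoped Pointwise in
lemma add {ι G : Type*} [Preorder ι] [IsDirectedOrder ι] [AddCommGroup G] [PartialOrder G]
    [IsOrderedAddMonoid G] {b b' : ι → G} (hb : DecreasesToZero b) (hb' : DecreasesToZero b') :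
    DecreasesToZero (b + b') := by
  refine ⟨hb.antitone.add hb'.antitone, ?_, fun g hg => ?_⟩
  · rintro _ ⟨i, rfl⟩
    exact add_nonneg (hb.isGLB.1 ⟨i, rfl⟩) (hb'.isGLB.1 ⟨i, rfl⟩)
  -- as the index set is directed, `g` is below `b i + b' j` for independent `i` and `j`
  · have hsum : IsGLB (range b + range b') 0 := by simpa using hb.isGLB.add hb'.isGLB
    refine hsum.2 ?_
    rintro _ ⟨_, ⟨i, rfl⟩, _, ⟨j, rfl⟩, rfl⟩
    obtain ⟨k, hik, hjk⟩ := exists_ge_ge i j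
    exact (hg ⟨k, rfl⟩).trans (add_le_add (hb.antitone hik) (hb'.antitone hjk))

lemma exists_monotone_seq {μ : Measure X} [SFinite μ] {ι : Type*} [SemilatticeSup ι] [Nonempty ι]
    {b : ι → L0 μ} (hb : DecreasesToZero b) :
    ∃ H : ℕ → ι, Monotone H ∧ DecreasesToZero (b ∘ H) := by
  obtain ⟨T, hTb, hTc, hTne, a, haT, hab⟩ :=
    L0.exists_countable_subset_isGLB (range_nonempty b) hb.isGLB.bddBelow
  obtain rfl : a = 0 := hab.unique hb.isGLB
  obtain ⟨u, rfl⟩ := hTc.exists_eq_range hTne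
  choose c hc using fun n => hTb ⟨n, rfl⟩
  refine ⟨partialSups c, (partialSups c).monotone,
    hb.antitone.comp_monotone (partialSups c).monotone, ?_, fun g hg => haT.2 ?_⟩
  · rintro _ ⟨n, rfl⟩
    exact hb.isGLB.1 ⟨_, rfl⟩
  · rintro _ ⟨n, rfl⟩
    exact (hg ⟨n, rfl⟩).trans ((hb.antitone (le_partialSups c n)).trans_eq (hc n))

lemma ae_tendsto_zero {μ : Measure X} {f : ℕ → L0 μ} (hf : DecreasesToZero f) :
    ∀ᵐ x ∂μ, Tendsto (fun n => f n x) atTop (nhds 0) := by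
  have hanti : ∀ᵐ x ∂μ, ∀ n, f (n + 1) x ≤ f n x :=
    ae_all_iff.2 fun n => AEEqFun.coeFn_le.2 (hf.antitone n.le_succ)
  filter_upwards [hanti, isGLB_range_iff_ae_isGLB.1 hf.isGLB,
    AEEqFun.coeFn_zero (μ := μ) (β := ℝ)] with x hx hglb h0
  rw [h0] at hglb
  exact tendsto_atTop_isGLB (antitone_nat_of_succ_le hx) hglb

end DecreasesToZero

lemma exists_isLUB_isGLB_zero_iff {μ : Measure X} [SFinite μ] {ι : Type*} [Preorder ι]
    {A : ι → Set (L0 μ)} (hA : Antitone A) (hne : ∀ i, (A i).Nonempty)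
    (hA_nonneg : ∀ i, ∀ f ∈ A i, 0 ≤ f) :
    (∃ b : ι → L0 μ, (∀ i, IsLUB (A i) (b i)) ∧ IsGLB (range b) 0) ↔
      ∃ b : ι → L0 μ, DecreasesToZero b ∧ ∀ i, b i ∈ upperBounds (A i) := by
  constructor
  · rintro ⟨b, hb, hglb⟩
    exact ⟨b, ⟨fun i j hij => (hb j).mono (hb i) (hA hij), hglb⟩, fun i => (hb i).1⟩
  · rintro ⟨b, hb, hbA⟩
    choose a ha using fun i => L0.exists_isLUB (hne i) ⟨b i, hbA i⟩
    refine ⟨a, ha, ?_, fun g hg => hb.isGLB.2 ?_⟩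
    · rintro _ ⟨i, rfl⟩
      obtain ⟨f, hf⟩ := hne i
      exact (hA_nonneg i f hf).trans ((ha i).1 hf)
    · rintro _ ⟨i, rfl⟩
      exact (hg ⟨i, rfl⟩).trans ((ha i).2 (hbA i))

/-! ### The distance on `L⁰(𝕏)` -/

section Distance

variable (μ : Measure X) [SFinite μ]

lemma dL0_zero_right (f : L0 μ) : dL0 μ f 0 = ∫ x, min |f x| 1 ∂μ.toFinite := by
  refine integral_congr_ae ?_
  rw [EventuallyEq, ae_toFinite]
  filter_upwards [AEEqFun.coeFn_zero (μ := μ) (β := ℝ)] with x hx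
  rw [hx, Pi.zero_apply, sub_zero]

lemma dL0_nonneg (f g : L0 μ) : 0 ≤ dL0 μ f g :=
  integral_nonneg fun _ => le_min (abs_nonneg _) zero_le_one

lemma norm_min_abs_one_le (r : ℝ) : ‖min |r| 1‖ ≤ 1 := by
  rw [Real.norm_of_nonneg (le_min (abs_nonneg r) zero_le_one)]
  exact min_le_right _ _

lemma aestronglyMeasurable_min_abs_one (f : L0 μ) :
    AEStronglyMeasurable (fun x => min |f x| 1) μ.toFinite :=
  (f.measurable.abs.min measurable_const).aestronglyMeasurable

lemma integrable_min_abs_one (f : L0 μ) : Integrable (fun x => min |f x| 1) μ.toFinite :=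
  .of_bound (aestronglyMeasurable_min_abs_one μ f) 1 (.of_forall fun _ => norm_min_abs_one_le _)

variable {μ}

lemma dL0_zero_le_of_abs_le {f g : L0 μ} (hfg : |f| ≤ |g|) : dL0 μ f 0 ≤ dL0 μ g 0 := by
  rw [dL0_zero_right, dL0_zero_right]
  refine integral_mono_ae (integrable_min_abs_one μ f) (integrable_min_abs_one μ g) ?_
  rw [EventuallyLE, ae_toFinite]
  filter_upwards [AEEqFun.coeFn_le.2 hfg, AEEqFun.coeFn_abs f, AEEqFun.coeFn_abs g]
    with x hx hfx hgx
  rw [hfx, hgx] at hx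
  exact min_le_min_right _ hx

lemma dL0_zero_mono {f g : L0 μ} (hf : 0 ≤ f) (hfg : f ≤ g) : dL0 μ f 0 ≤ dL0 μ g 0 := by
  refine dL0_zero_le_of_abs_le ?_
  rwa [abs_of_nonneg hf, abs_of_nonneg (hf.trans hfg)]

lemma eq_zero_of_dL0_zero_le {f : L0 μ} (hf : dL0 μ f 0 ≤ 0) : f = 0 := by
  have hae : (fun x => min |f x| 1) =ᵐ[μ.toFinite] 0 := by
    rw [← integral_eq_zero_iff_of_nonneg (fun _ => le_min (abs_nonneg _) zero_le_one)
      (integrable_min_abs_one μ f), ← dL0_zero_right]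
    exact hf.antisymm (dL0_nonneg μ f 0)
  rw [EventuallyEq, ae_toFinite] at hae
  refine AEEqFun.ext ?_
  filter_upwards [hae, AEEqFun.coeFn_zero (μ := μ) (β := ℝ)] with x hx h0
  rw [h0]
  by_contra hfx
  exact (lt_min (abs_pos.2 hfx) one_pos).ne' hx

lemma le_of_eventually_le_add {ι : Type*} {l : Filter ι} [l.NeBot] {f g : L0 μ} {w : ι → L0 μ}
    (hw : Tendsto (fun i => dL0 μ (w i) 0) l (nhds 0)) (h : ∀ᶠ i in l, f ≤ w i + g) : f ≤ g := by
  have hpos : (f - g) ⊔ 0 = 0 := by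
    refine eq_zero_of_dL0_zero_le (ge_of_tendsto hw (h.mono fun i hi => ?_))
    refine dL0_zero_le_of_abs_le ?_
    rw [abs_of_nonneg le_sup_right]
    exact sup_le ((sub_le_iff_le_add.2 hi).trans (le_abs_self _)) (abs_nonneg _)
  exact sub_nonpos.1 (sup_eq_right.1 hpos)

lemma DecreasesToZero.tendsto_dL0 {f : ℕ → L0 μ} (hf : DecreasesToZero f) :
    Tendsto (fun n => dL0 μ (f n) 0) atTop (nhds 0) := by
  have hlim : ∀ᵐ x ∂μ.toFinite, Tendsto (fun n => min |f n x| 1) atTop (nhds 0) := by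
    rw [ae_toFinite]
    filter_upwards [hf.ae_tendsto_zero] with x hx
    simpa using hx.abs.min (tendsto_const_nhds (x := (1 : ℝ)))
  simpa [dL0_zero_right] using tendsto_integral_of_dominated_convergence (fun _ => 1)
    (fun n => aestronglyMeasurable_min_abs_one μ (f n)) (integrable_const 1)
    (fun n => .of_forall fun x => norm_min_abs_one_le (f n x)) hlim

end Distance

/-! ### Summable families -/

section Module

variable {μ : Measure X} [SFinite μ] {M : Type*} [AddCommGroup M] [Module (L0 μ) M]
  [BanachMod μ M]

lemma pn_nonneg (v : M) : 0 ≤ pn μ v := BanachMod.pn_nonneg v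

lemma pn_add_le (v w : M) : pn μ (v + w) ≤ pn μ v + pn μ w := BanachMod.pn_add_le v w

lemma eq_zero_of_pn_le_zero {v : M} (hv : pn μ v ≤ 0) : v = 0 :=
  (BanachMod.pn_eq_zero (μ := μ) v).1 (hv.antisymm (pn_nonneg v))

lemma pn_neg (v : M) : pn μ (-v) = pn μ v := by
  have h01 : (0 : L0 μ) ≤ 1 := (AEEqFun.mk_le_mk _ _).2 (.of_forall fun _ => zero_le_one)
  have h : pn μ ((-1 : L0 μ) • v) = |-1| * pn μ v := BanachMod.pn_smul _ v
  rwa [neg_one_smul, abs_neg, abs_of_nonneg h01, one_mul] at h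

lemma pn_sub_le (v w : M) : pn μ (v - w) ≤ pn μ v + pn μ w := by
  rw [sub_eq_add_neg, ← pn_neg w]
  exact pn_add_le v (-w)

lemma pn_sub_comm (v w : M) : pn μ (v - w) = pn μ (w - v) := by
  rw [← neg_sub, pn_neg]

lemma pn_sub_le_add (u v w : M) : pn μ (u - w) ≤ pn μ (u - v) + pn μ (v - w) := by
  rw [← sub_add_sub_cancel u v w]
  exact pn_add_le _ _

lemma exists_tendsto_dM_of_pn_sub_le {u : ℕ → M} {a : ℕ → L0 μ}
    (ha : Tendsto (fun n => dL0 μ (a n) 0) atTop (nhds 0))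
    (hu : ∀ m n, m ≤ n → pn μ (u n - u m) ≤ a m) :
    ∃ s : M, Tendsto (fun n => dM μ (u n) s) atTop (nhds 0) := by
  refine BanachMod.complete u fun ε hε => ?_
  obtain ⟨N, hN⟩ := eventually_atTop.1 (ha.eventually_lt_const hε)
  have hlt : ∀ m ≥ N, ∀ n ≥ m, dL0 μ (pn μ (u n - u m)) 0 < ε := fun m hm n hmn =>
    (dL0_zero_mono (pn_nonneg _) (hu m n hmn)).trans_lt (hN m hm)
  refine ⟨N, fun m hm n hn => ?_⟩
  rcases le_total n m with hnm | hmn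
  · exact hlt n hn m hnm
  · have h := hlt m hm n hmn
    rwa [pn_sub_comm] at h

variable {I : Type*} {v : I → M} {s : M}

lemma antitone_cauchyUB : Antitone (cauchyUB μ v) := by
  rintro F F' hFF' _ ⟨G, hG, rfl⟩
  exact ⟨G, hG.mono_right hFF', rfl⟩

lemma mem_sumUB_iff {F : Finset I} {f : L0 μ} :
    f ∈ sumUB μ v s F ↔ ∃ F', F ⊆ F' ∧ f = pn μ (s - ∑ i ∈ F', v i) := by
  classical
  constructor
  · rintro ⟨G, hG, rfl⟩
    exact ⟨F ∪ G, Finset.subset_union_left, by rw [Finset.sum_union hG.symm]⟩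
  · rintro ⟨F', hFF', rfl⟩
    exact ⟨F' \ F, Finset.sdiff_disjoint, by rw [add_comm, Finset.sum_sdiff hFF']⟩

lemma antitone_sumUB : Antitone (sumUB μ v s) := by
  intro F F' hFF' f hf
  obtain ⟨F'', hF'', rfl⟩ := mem_sumUB_iff.1 hf
  exact mem_sumUB_iff.2 ⟨F'', hFF'.trans hF'', rfl⟩

lemma cauchy_condition_iff :
    (∃ b : Finset I → L0 μ, (∀ F, IsLUB (cauchyUB μ v F) (b F)) ∧ IsGLB (range b) 0) ↔
      ∃ b : Finset I → L0 μ, DecreasesToZero b ∧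
        ∀ F G, Disjoint G F → pn μ (∑ i ∈ G, v i) ≤ b F := by
  have hnonneg : ∀ F, ∀ f ∈ cauchyUB μ v F, 0 ≤ f := by
    rintro F _ ⟨G, -, rfl⟩
    exact pn_nonneg _
  rw [exists_isLUB_isGLB_zero_iff antitone_cauchyUB
    (fun F => ⟨_, ∅, Finset.disjoint_empty_left F, rfl⟩) hnonneg]
  refine exists_congr fun b => and_congr_right fun _ => forall_congr' fun F => ?_
  exact ⟨fun h G hG => h ⟨G, hG, rfl⟩, fun h => by rintro _ ⟨G, hG, rfl⟩; exact h G hG⟩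

lemma hasSumMod_iff :
    HasSumMod μ v s ↔
      ∃ b : Finset I → L0 μ, DecreasesToZero b ∧ ∀ F, pn μ (s - ∑ i ∈ F, v i) ≤ b F := by
  have hnonneg : ∀ F, ∀ f ∈ sumUB μ v s F, 0 ≤ f := by
    rintro F _ ⟨G, -, rfl⟩
    exact pn_nonneg _
  rw [HasSumMod, exists_isLUB_isGLB_zero_iff antitone_sumUB
    (fun F => ⟨_, ∅, Finset.disjoint_empty_left F, rfl⟩) hnonneg]
  refine exists_congr fun b => and_congr_right fun hb => ?_
  refine ⟨fun h F => h F (mem_sumUB_iff.2 ⟨F, subset_rfl, rfl⟩), fun h F f hf => ?_⟩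
  obtain ⟨F', hFF', rfl⟩ := mem_sumUB_iff.1 hf
  exact (h F').trans (hb.antitone hFF')

lemma HasSumMod.exists_decreasesToZero_pn_sum_le (hs : HasSumMod μ v s) :
    ∃ b : Finset I → L0 μ, DecreasesToZero b ∧
      ∀ F G, Disjoint G F → pn μ (∑ i ∈ G, v i) ≤ b F := by
  classical
  obtain ⟨b, hb, hbs⟩ := hasSumMod_iff.1 hs
  refine ⟨b + b, hb.add hb, fun F G hG => ?_⟩
  calc pn μ (∑ i ∈ G, v i)
      = pn μ ((s - ∑ i ∈ F, v i) - (s - ∑ i ∈ F ∪ G, v i)) := by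
        rw [sub_sub_sub_cancel_left, Finset.sum_union hG.symm, add_sub_cancel_left]
    _ ≤ pn μ (s - ∑ i ∈ F, v i) + pn μ (s - ∑ i ∈ F ∪ G, v i) := pn_sub_le _ _
    _ ≤ b F + b F :=
        add_le_add (hbs F) ((hbs (F ∪ G)).trans (hb.antitone Finset.subset_union_left))

lemma HasSumMod.tendsto_dM_sum (hs : HasSumMod μ v s) {ι : Type*} {l : Filter ι}
    {F : ι → Finset I} (hF : ∀ i, v i ≠ 0 → ∀ᶠ n in l, i ∈ F n) :
    Tendsto (fun n => dM μ (∑ i ∈ F n, v i) s) l (nhds 0) := by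
  classical
  obtain ⟨b, hb, hbs⟩ := hasSumMod_iff.1 hs
  obtain ⟨H, -, hH⟩ := hb.exists_monotone_seq
  refine tendsto_order.2 ⟨fun r hr => .of_forall fun n => hr.trans_le (dL0_nonneg μ _ _),
    fun ε hε => ?_⟩
  obtain ⟨k, hk⟩ := (hH.tendsto_dL0.eventually_lt_const hε).exists
  have hmem : ∀ᶠ n in l, ∀ i ∈ H k, v i ≠ 0 → i ∈ F n :=
    (eventually_all_finset (H k)).2 fun i _ => eventually_imp_distrib_left.2 (hF i)
  filter_upwards [hmem] with n hn
  have hunion : ∑ i ∈ F n, v i = ∑ i ∈ H k ∪ F n, v i :=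
    Finset.sum_subset Finset.subset_union_right fun i hi hiF =>
      not_not.1 fun hvi => hiF ((Finset.mem_union.1 hi).elim (hn i · hvi) id)
  refine (dL0_zero_mono (pn_nonneg _) ?_).trans_lt hk
  rw [hunion, pn_sub_comm]
  exact (hbs _).trans (hb.antitone Finset.subset_union_left)

section Cauchy

variable {b : Finset I → L0 μ}

lemma pn_sum_sub_sum_le (hbv : ∀ F G, Disjoint G F → pn μ (∑ i ∈ G, v i) ≤ b F)
    {F F' : Finset I} (hFF' : F ⊆ F') :
    pn μ (∑ i ∈ F', v i - ∑ i ∈ F, v i) ≤ b F := by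
  classical
  rw [← Finset.sum_sdiff_eq_sub hFF']
  exact hbv F _ Finset.sdiff_disjoint

lemma summableMod_of_pn_sum_le (hb : DecreasesToZero b)
    (hbv : ∀ F G, Disjoint G F → pn μ (∑ i ∈ G, v i) ≤ b F) :
    SummableMod μ v := by
  classical
  obtain ⟨H, hH, hbH⟩ := hb.exists_monotone_seq
  obtain ⟨s, hs⟩ := exists_tendsto_dM_of_pn_sub_le hbH.tendsto_dL0
    fun m n hmn => pn_sum_sub_sum_le hbv (hH hmn)
  have hsH (n : ℕ) : pn μ (s - ∑ i ∈ H n, v i) ≤ b (H n) := by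
    refine le_of_eventually_le_add hs ((eventually_ge_atTop n).mono fun m hnm => ?_)
    rw [pn_sub_comm _ s]
    exact (pn_sub_le_add _ _ _).trans (by gcongr; exact pn_sum_sub_sum_le hbv (hH hnm))
  refine ⟨s, hasSumMod_iff.2 ⟨b, hb, fun F => ?_⟩⟩
  -- comparing with the sum over `F ∪ H n` costs `2 b (H n)`, whose infimum is `0`
  refine sub_nonpos.1 ((hbH.add hbH).isGLB.2 ?_)
  rintro _ ⟨n, rfl⟩
  rw [sub_le_iff_le_add]
  calc pn μ (s - ∑ i ∈ F, v i)
      ≤ pn μ (s - ∑ i ∈ F ∪ H n, v i) + pn μ (∑ i ∈ F ∪ H n, v i - ∑ i ∈ F, v i) :=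
        pn_sub_le_add _ _ _
    _ ≤ pn μ (s - ∑ i ∈ H n, v i) + pn μ (∑ i ∈ F ∪ H n, v i - ∑ i ∈ H n, v i) + b F := by
        gcongr
        · rw [pn_sub_comm (∑ i ∈ F ∪ H n, v i)]
          exact pn_sub_le_add _ _ _
        · exact pn_sum_sub_sum_le hbv Finset.subset_union_left
    _ ≤ b (H n) + b (H n) + b F := by
        gcongr
        · exact hsH n
        · exact pn_sum_sub_sum_le hbv Finset.subset_union_right

lemma countable_support_of_pn_sum_le (hb : DecreasesToZero b)
    (hbv : ∀ F G, Disjoint G F → pn μ (∑ i ∈ G, v i) ≤ b F) :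
    {i | v i ≠ 0}.Countable := by
  classical
  obtain ⟨H, -, hH⟩ := hb.exists_monotone_seq
  refine (countable_iUnion fun n => (H n).countable_toSet).mono fun i hi => ?_
  by_contra hiH
  simp only [mem_iUnion, Finset.mem_coe, not_exists] at hiH
  refine hi (eq_zero_of_pn_le_zero (hH.isGLB.2 ?_))
  rintro _ ⟨n, rfl⟩
  simpa using hbv (H n) {i} (Finset.disjoint_singleton_left.2 (hiH n))

end Cauchy

theorem cauchy_summability_criterion_general (v : I → M) :
    (SummableMod μ v ↔
      ∃ b : Finset I → L0 μ, (∀ F, IsLUB (cauchyUB μ v F) (b F)) ∧ IsGLB (range b) 0)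
    ∧ (SummableMod μ v → {i : I | v i ≠ 0}.Countable)
    ∧ (∀ s : M, HasSumMod μ v s → ∀ {ι : Type*} (l : Filter ι) (F : ι → Finset I),
        (∀ i : I, v i ≠ 0 → ∀ᶠ n in l, i ∈ F n) →
        Tendsto (fun n => dM μ (∑ i ∈ F n, v i) s) l (nhds 0)) := by
  rw [cauchy_condition_iff]
  refine ⟨⟨fun ⟨s, hs⟩ => hs.exists_decreasesToZero_pn_sum_le,
    fun ⟨b, hb, hbv⟩ => summableMod_of_pn_sum_le hb hbv⟩, fun ⟨s, hs⟩ => ?_,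
    fun s hs ι l F hF => hs.tendsto_dM_sum hF⟩
  obtain ⟨b, hb, hbv⟩ := hs.exists_decreasesToZero_pn_sum_le
  exact countable_support_of_pn_sum_le hb hbv

end Module

/-- Cauchy summability criterion. A family `{v_i}_{i ∈ I}` in a Banach
`L⁰(𝕏)`-module is summable if and only if `⋀_F ⋁_G |∑_{i∈G} v_i| = 0` (the suprema over
finite `G ⊆ I ∖ F` being the values `b F`, and the infimum over finite `F` being `0`).
In this case `J := {i | v_i ≠ 0}` is at most countable and, for every increasing sequence
`(F_n)` of finite subsets of `J` with `⋃_n F_n = J`, the partial sums `∑_{i ∈ F_n} v_i`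
converge to `∑_{i ∈ I} v_i` in `ℳ`. -/
theorem cauchy_summability_criterion
    (μ : Measure X) [SigmaFinite μ]
    (M : Type*) [AddCommGroup M] [Module (L0 μ) M] [BanachMod μ M]
    {I : Type*} (v : I → M) :
    (SummableMod μ v ↔
      ∃ b : Finset I → L0 μ, (∀ F, IsLUB (cauchyUB μ v F) (b F)) ∧ IsGLB (Set.range b) 0)
    ∧ (SummableMod μ v → {i : I | v i ≠ 0}.Countable)
    ∧ (∀ s : M, HasSumMod μ v s → ∀ F : ℕ → Finset I, Monotone F →
        (∀ n : ℕ, ∀ i ∈ F n, v i ≠ 0) → (∀ i : I, v i ≠ 0 → ∃ n : ℕ, i ∈ F n) →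
        Tendsto (fun n => dM μ (∑ i ∈ F n, v i) s) atTop (nhds 0)) := by
  obtain ⟨hiff, hcount, htendsto⟩ := cauchy_summability_criterion_general (μ := μ) v
  exact ⟨hiff, hcount, fun s hs F hF _ hcov => htendsto s hs atTop F fun i hi =>
    (hcov i hi).elim fun n hn => (eventually_ge_atTop n).mono fun _ hnm => hF hnm hn⟩

end Paper
end
end

section
/- Let 𝕏 be a σ-finite measure space and I a nonempty index set. The map φ : L^0(𝕏;ℓ₁(I)) → ℓ₁(I,L^0(𝕏)) defined by φ(a) := (a(·)_i)_{i∈I} is an isomorphism of Banach L^0(𝕏)-modules. -/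
/-!
Only the possible uncountability of `I` stands in the way of checking everything pointwise, since
almost-everywhere statements can be intersected over countably many indices only. It is removed
twice.

* A measurable map into `ℓ₁(I)` has separable range, elements of `ℓ₁(I)` have countable support,
  and vanishing outside a given set of indices is a closed condition; so one countable set of
  indices carries the map. Hence an upper bound of the partial sums `∑_{i ∈ F} |a(·)_i|` dominates
  all partial sums simultaneously at almost every point, and thus dominates `‖a(·)‖`.
* If the partial sums `∑_{i ∈ F} |g_i|` are bounded by `b`, then the integrals of
  `|g_i| / (1 + |b|)` against an equivalent finite measure have a finite sum over `I`; so all but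
  countably many of the `g_i` vanish, and the countably many others are, at almost every point,
  the coordinates of an element of `ℓ₁(I)`.
-/

open MeasureTheory Filter Set TensorProduct

noncomputable section

namespace Paper

variable {X : Type*} [MeasurableSpace X]

/-- A realization of the `L⁰`-Lebesgue–Bochner space `L⁰(𝕏;𝔹)` as a Banach `L⁰(𝕏)`-module:
the Banach `L⁰(𝕏)`-module `V` is identified, via the bijection `ev`, with the space
`X →ₘ[μ] B` of (classes of) measurable maps with separable range up to a.e. equality,
in such a way that the module operations are the a.e. pointwise ones and the pointwise norm
of `v` is a.e. equal to `x ↦ ‖ev v x‖`. -/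
structure IsL0B (μ : Measure X) [SFinite μ] (B : Type*) [NormedAddCommGroup B]
    [NormedSpace ℝ B] (V : Type*) [AddCommGroup V] [Module (L0 μ) V] [BanachMod μ V]
    (ev : V → (X →ₘ[μ] B)) : Prop where
  bij : Function.Bijective ev
  add : ∀ v w : V, ev (v + w) = ev v + ev w
  smul : ∀ (f : L0 μ) (v : V), ∀ᵐ x ∂μ, (ev (f • v)) x = f x • (ev v) x
  norm : ∀ v : V, ∀ᵐ x ∂μ, (pn μ v) x = ‖(ev v) x‖

section LpSpace

variable {I : Type*} {E : I → Type*} [∀ i, NormedAddCommGroup (E i)] {p : ENNReal}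

theorem countable_support_of_memℓp (hp : p ≠ ⊤) {y : ∀ i, E i} (hy : Memℓp y p) :
    {i | y i ≠ 0}.Countable := by
  rcases p.trichotomy with rfl | rfl | hpos
  · exact hy.finite_dsupport.countable
  · exact absurd rfl hp
  · refine (hy.summable hpos).countable_support.mono fun i hi => ?_
    exact (Real.rpow_pos_of_pos (norm_pos_iff.2 hi) _).ne'

theorem isClosed_setOf_forall_notMem_eq_zero [Fact (1 ≤ p)] (J : Set I) :
    IsClosed {y : lp E p | ∀ i ∉ J, y i = 0} := by
  simp only [ofPred_forall]
  exact isClosed_biInter fun i _ =>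
    isClosed_eq (lp.lipschitzWith_one_eval p i).continuous continuous_const

theorem exists_countable_support_of_isSeparable [Fact (1 ≤ p)] (hp : p ≠ ⊤) {S : Set (lp E p)}
    (hS : TopologicalSpace.IsSeparable S) :
    ∃ J : Set I, J.Countable ∧ ∀ y ∈ S, ∀ i ∉ J, y i = 0 := by
  obtain ⟨C, hC, hSC⟩ := hS
  let J : Set I := ⋃ y ∈ C, {i | y i ≠ 0}
  have hCJ : ∀ y ∈ C, ∀ i ∉ J, y i = 0 := fun y hy i hi =>
    not_not.1 fun hyi => hi (mem_biUnion hy hyi)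
  exact ⟨J, hC.biUnion fun y _ => countable_support_of_memℓp hp (lp.memℓp y),
    fun y hy => closure_minimal hCJ (isClosed_setOf_forall_notMem_eq_zero J) (hSC hy)⟩

theorem hasSum_norm_lp_one (y : lp E 1) : HasSum (fun i => ‖y i‖) ‖y‖ := by
  simpa using lp.hasSum_norm (p := 1) (by simp) y

theorem norm_lp_one_le_of_forall_sum_le {y : lp E 1} {J : Set I} (hJ : ∀ i ∉ J, y i = 0) {c : ℝ}
    (hc : ∀ F : Finset J, ∑ j ∈ F, ‖y j‖ ≤ c) : ‖y‖ ≤ c := by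
  have hsupp : (Function.support fun i => ‖y i‖) ⊆ J := fun i hi =>
    not_not.1 fun hiJ => hi (by simp [hJ i hiJ])
  exact hasSum_le_of_sum_le
    ((hasSum_subtype_iff_of_support_subset hsupp).2 (hasSum_norm_lp_one y)) hc

theorem aestronglyMeasurable_lp_of_apply [Fact (1 ≤ p)] (hp : p ≠ ⊤) {μ : Measure X}
    {f : X → lp E p} {J : Set I} (hJ : J.Countable) (hf0 : ∀ᵐ x ∂μ, ∀ i ∉ J, f x i = 0)
    (hf : ∀ i ∈ J, AEStronglyMeasurable (fun x => f x i) μ) : AEStronglyMeasurable f μ := by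
  classical
  have : Countable J := hJ.to_subtype
  -- `Finset J` is countable, so the net of partial sums has a measurable limit.
  refine aestronglyMeasurable_of_tendsto_ae (atTop : Filter (Finset J))
    (f := fun F x => ∑ j ∈ F, lp.single p (j : I) (f x j)) (fun F => ?_) ?_
  · exact Finset.aestronglyMeasurable_fun_sum F fun j _ =>
      (lp.isometry_single (j : I)).continuous.comp_aestronglyMeasurable (hf j j.2)
  · filter_upwards [hf0] with x hx
    have hsupp : (Function.support fun i => lp.single p i (f x i)) ⊆ J := fun i hi =>
      not_not.1 fun hiJ => hi (by simp [hx i hiJ])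
    exact (hasSum_subtype_iff_of_support_subset hsupp).2 (lp.hasSum_single hp (f x))

end LpSpace

section DominatedPartialSums

variable {I : Type*} {μ : Measure X}

theorem countable_setOf_not_ae_eq_zero [SFinite μ] {w : I → X → ENNReal} {W : X → ENNReal}
    (hw : ∀ i, AEMeasurable (w i) μ) (hW : AEMeasurable W μ) (hW_top : ∀ᵐ x ∂μ, W x ≠ ⊤)
    (hle : ∀ F : Finset I, ∀ᵐ x ∂μ, ∑ i ∈ F, w i x ≤ W x) :
    {i | ¬ w i =ᵐ[μ] 0}.Countable := by
  -- Dividing by `1 + W` makes the bound integrable against the finite measure `μ.toFinite`.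
  let u : I → X → ENNReal := fun i x => w i x / (1 + W x)
  have hu : ∀ i, AEMeasurable (u i) μ.toFinite := fun i =>
    ((hw i).div (hW.const_add 1)).mono_ac (toFinite_absolutelyContinuous μ)
  have hsum_le : ∀ F : Finset I, ∑ i ∈ F, ∫⁻ x, u i x ∂μ.toFinite ≤ μ.toFinite univ := by
    intro F
    have hle_one : ∀ᵐ x ∂μ.toFinite, ∑ i ∈ F, u i x ≤ 1 := by
      rw [ae_toFinite]
      filter_upwards [hle F] with x hx
      simp only [u, div_eq_mul_inv, ← Finset.sum_mul]
      exact ENNReal.div_le_of_le_mul (by simpa using hx.trans le_add_self)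
    calc ∑ i ∈ F, ∫⁻ x, u i x ∂μ.toFinite = ∫⁻ x, ∑ i ∈ F, u i x ∂μ.toFinite :=
          (lintegral_finsetSum' F fun i _ => hu i).symm
      _ ≤ ∫⁻ _, 1 ∂μ.toFinite := lintegral_mono_ae hle_one
      _ = μ.toFinite univ := lintegral_one
  have htsum : ∑' i, ∫⁻ x, u i x ∂μ.toFinite ≠ ⊤ := by
    refine ne_top_of_le_ne_top (measure_ne_top μ.toFinite univ) ?_
    rw [ENNReal.tsum_eq_iSup_sum]
    exact iSup_le hsum_le
  refine (Summable.countable_support_ennreal htsum).mono fun i hi => ?_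
  refine Function.mem_support.2 fun hzero => hi ?_
  have hui : u i =ᵐ[μ] 0 := by
    rwa [lintegral_eq_zero_iff' (hu i), ae_toFinite] at hzero
  filter_upwards [hui, hW_top] with x hx hx_top
  exact (ENNReal.div_eq_zero_iff.1 hx).resolve_right (by simpa using hx_top)

theorem mem_upperBounds_l1PartialSumsF_iff {g : I → L0 μ} {b : L0 μ} :
    b ∈ upperBounds (l1PartialSumsF μ g) ↔
      ∀ F : Finset I, ∀ᵐ x ∂μ, ∑ i ∈ F, |g i x| ≤ b x := by
  have hsum (F : Finset I) : ∀ᵐ x ∂μ, (∑ i ∈ F, |g i|) x = ∑ i ∈ F, |g i x| := by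
    filter_upwards [AEEqFun.coeFn_fun_finsetSum F fun i => |g i|,
      (ae_ball_iff F.countable_toSet).2 fun i _ => AEEqFun.coeFn_abs (g i)] with x hx habs
    exact hx.trans (Finset.sum_congr rfl habs)
  have hle (F : Finset I) : ∑ i ∈ F, |g i| ≤ b ↔ ∀ᵐ x ∂μ, ∑ i ∈ F, |g i x| ≤ b x := by
    rw [← AEEqFun.coeFn_le]
    exact eventually_congr ((hsum F).mono fun x hx => by rw [hx])
  simp only [← hle]
  exact ⟨fun hb F => hb ⟨F, rfl⟩, by rintro hb _ ⟨F, rfl⟩; exact hb F⟩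

theorem ae_forall_sum_abs_le {g : I → L0 μ} {b : L0 μ} (hb : b ∈ upperBounds (l1PartialSumsF μ g))
    {J : Set I} (hJ : J.Countable) : ∀ᵐ x ∂μ, ∀ F : Finset J, ∑ j ∈ F, |g j x| ≤ b x := by
  have : Countable J := hJ.to_subtype
  refine ae_all_iff.2 fun F => ?_
  simpa only [Finset.sum_map, Function.Embedding.subtype_apply] using
    mem_upperBounds_l1PartialSumsF_iff.1 hb (F.map (Function.Embedding.subtype _))

theorem countable_setOf_ne_zero_of_mem_upperBounds [SFinite μ] {g : I → L0 μ} {b : L0 μ}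
    (hb : b ∈ upperBounds (l1PartialSumsF μ g)) : {i | g i ≠ 0}.Countable := by
  have hle (F : Finset I) : ∀ᵐ x ∂μ, ∑ i ∈ F, ‖g i x‖ₑ ≤ ENNReal.ofReal (b x) := by
    filter_upwards [mem_upperBounds_l1PartialSumsF_iff.1 hb F] with x hx
    simp only [Real.enorm_eq_ofReal_abs]
    rw [← ENNReal.ofReal_sum_of_nonneg fun i _ => abs_nonneg _]
    exact ENNReal.ofReal_le_ofReal hx
  have hcount : {i | ¬ (fun x => ‖g i x‖ₑ) =ᵐ[μ] 0}.Countable :=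
    countable_setOf_not_ae_eq_zero (fun i => (g i).aestronglyMeasurable.enorm)
      b.aestronglyMeasurable.aemeasurable.ennreal_ofReal
      (.of_forall fun _ => ENNReal.ofReal_ne_top) hle
  refine hcount.mono fun i hi => mem_ofPred.2 fun h0 => hi (AEEqFun.ext ?_)
  filter_upwards [h0, AEEqFun.coeFn_zero (μ := μ) (β := ℝ)] with x hx hx0
  rw [hx0]
  exact enorm_eq_zero.1 hx

end DominatedPartialSums

section Coordinates

variable {I : Type*} {E : I → Type*} [∀ i, NormedAddCommGroup (E i)] {p : ENNReal}
  [Fact (1 ≤ p)] {μ : Measure X}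

/-- `g` is the family `(f(·)_i)_{i ∈ I}` of coordinate functions of the class `f` of measurable
maps into `ℓ_p`. It is a relation rather than a function of `f` because the coordinate functions
are only ever known up to a.e. equality. -/
def IsCoordFamily (f : X →ₘ[μ] lp E p) (g : ∀ i, X →ₘ[μ] E i) : Prop :=
  ∀ i, g i =ᵐ[μ] fun x => f x i

namespace IsCoordFamily

variable {f f' : X →ₘ[μ] lp E p} {g g' : ∀ i, X →ₘ[μ] E i}

theorem right_unique (h : IsCoordFamily f g) (h' : IsCoordFamily f g') : g = g' :=
  funext fun i => AEEqFun.ext <| (h i).trans (h' i).symm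

theorem left_unique (hp : p ≠ ⊤) (h : IsCoordFamily f g) (h' : IsCoordFamily f' g) : f = f' := by
  obtain ⟨J, hJ, hJ0⟩ := exists_countable_support_of_isSeparable hp
    (f.stronglyMeasurable.isSeparable_range.union f'.stronglyMeasurable.isSeparable_range)
  refine AEEqFun.ext ?_
  filter_upwards [(ae_ball_iff hJ).2 fun i _ => h i, (ae_ball_iff hJ).2 fun i _ => h' i]
    with x hx hx'
  ext i
  by_cases hi : i ∈ J
  · rw [← hx i hi, ← hx' i hi]
  · rw [hJ0 _ (.inl (mem_range_self x)) i hi, hJ0 _ (.inr (mem_range_self x)) i hi]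

theorem add (h : IsCoordFamily f g) (h' : IsCoordFamily f' g') :
    IsCoordFamily (f + f') (g + g') := fun i => by
  filter_upwards [h i, h' i, AEEqFun.coeFn_add f f', AEEqFun.coeFn_add (g i) (g' i)]
    with x hx hx' hf hg
  simp only [Pi.add_apply] at hf hg ⊢
  rw [hg, hf, hx, hx', lp.coeFn_add, Pi.add_apply]

theorem smul {𝕜 : Type*} [NormedField 𝕜] {f f' : X →ₘ[μ] lp (fun _ : I => 𝕜) p}
    {g : I → X →ₘ[μ] 𝕜} {r : X →ₘ[μ] 𝕜} (h : IsCoordFamily f g)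
    (hf' : ∀ᵐ x ∂μ, f' x = r x • f x) : IsCoordFamily f' fun i => r * g i := fun i => by
  filter_upwards [h i, hf', AEEqFun.coeFn_mul r (g i)] with x hx hx' hmul
  rw [hmul, hx', Pi.mul_apply, hx, lp.coeFn_smul, Pi.smul_apply, smul_eq_mul]

theorem isLUB_l1PartialSumsF {f : X →ₘ[μ] lp (fun _ : I => ℝ) 1} {g : I → L0 μ} {n : L0 μ}
    (h : IsCoordFamily f g) (hn : ∀ᵐ x ∂μ, n x = ‖f x‖) : IsLUB (l1PartialSumsF μ g) n := by
  constructor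
  · refine mem_upperBounds_l1PartialSumsF_iff.2 fun F => ?_
    filter_upwards [hn, (ae_ball_iff F.countable_toSet).2 fun i _ => h i] with x hnx hx
    calc ∑ i ∈ F, |g i x| = ∑ i ∈ F, ‖f x i‖ := Finset.sum_congr rfl fun i hi => by
          rw [hx i hi, Real.norm_eq_abs]
      _ ≤ ‖f x‖ := sum_le_hasSum F (fun i _ => norm_nonneg _) (hasSum_norm_lp_one (f x))
      _ = n x := hnx.symm
  · intro b hb
    obtain ⟨J, hJ, hJ0⟩ := exists_countable_support_of_isSeparable ENNReal.one_ne_top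
      f.stronglyMeasurable.isSeparable_range
    rw [← AEEqFun.coeFn_le]
    filter_upwards [hn, ae_forall_sum_abs_le hb hJ, (ae_ball_iff hJ).2 fun i _ => h i]
      with x hnx hbx hx
    rw [hnx]
    refine norm_lp_one_le_of_forall_sum_le (hJ0 _ (mem_range_self x)) fun F => ?_
    simpa only [hx _ (Subtype.coe_prop _), Real.norm_eq_abs] using hbx F

end IsCoordFamily

theorem exists_isCoordFamily_of_mem_upperBounds [SFinite μ] {g : I → L0 μ} {b : L0 μ}
    (hb : b ∈ upperBounds (l1PartialSumsF μ g)) :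
    ∃ f : X →ₘ[μ] lp (fun _ : I => ℝ) 1, IsCoordFamily f g := by
  let J : Set I := {i | g i ≠ 0}
  have hJ : J.Countable := countable_setOf_ne_zero_of_mem_upperBounds hb
  have hmem : ∀ᵐ x ∂μ, Memℓp (J.indicator fun i => g i x) 1 := by
    filter_upwards [ae_forall_sum_abs_le hb hJ] with x hx
    refine memℓp_gen ?_
    simp only [ENNReal.toReal_one, Real.rpow_one, norm_indicator_eq_indicator_norm]
    exact summable_subtype_iff_indicator.1 (summable_of_sum_le (fun _ => norm_nonneg _) hx)
  have hex : ∀ᵐ x ∂μ, ∃ y : lp (fun _ : I => ℝ) 1, (y : I → ℝ) = J.indicator fun i => g i x :=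
    hmem.mono fun x hx => ⟨⟨_, hx⟩, rfl⟩
  obtain ⟨f, hf⟩ := skolem.1 hex
  have hfg : ∀ i, ∀ᵐ x ∂μ, g i x = f x i := by
    intro i
    by_cases hi : i ∈ J
    · filter_upwards [hf] with x hx
      rw [hx, indicator_of_mem hi]
    · rw [not_not.1 hi]
      filter_upwards [hf, AEEqFun.coeFn_zero (μ := μ) (β := ℝ)] with x hx hx0
      rw [hx, indicator_of_notMem hi, hx0, Pi.zero_apply]
  have hfm : AEStronglyMeasurable f μ :=
    aestronglyMeasurable_lp_of_apply ENNReal.one_ne_top hJ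
      (hf.mono fun x hx i hi => (congrFun hx i).trans (indicator_of_notMem hi _))
      fun i _ => (g i).aestronglyMeasurable.congr (hfg i)
  refine ⟨AEEqFun.mk f hfm, fun i => ?_⟩
  filter_upwards [hfg i, AEEqFun.coeFn_mk f hfm] with x hx hmk
  rw [hx, hmk]

end Coordinates

theorem L0_valued_l1_eq_l1_of_L0_general
    (μ : Measure X) [SFinite μ] {I : Type*}
    (V : Type*) [AddCommGroup V] [Module (L0 μ) V] [BanachMod μ V]
    (ev : V → (X →ₘ[μ] lp (fun _ : I => ℝ) 1))
    (hV : IsL0B μ (lp (fun _ : I => ℝ) 1) V ev)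
    (coord : V → I → L0 μ)
    (hcoord : ∀ (a : V) (i : I), ∀ᵐ x ∂μ, (coord a i) x = (ev a) x i) :
    (∀ a : V, Meml1F μ (coord a))
    ∧ (∀ a b : V, coord (a + b) = coord a + coord b)
    ∧ (∀ (f : L0 μ) (a : V), coord (f • a) = fun i => f * coord a i)
    ∧ Function.Injective coord
    ∧ (∀ g : I → L0 μ, Meml1F μ g → ∃ a : V, coord a = g)
    ∧ (∀ a : V, IsLUB (l1PartialSumsF μ (coord a)) (pn μ a)) := by
  have hfam (a : V) : IsCoordFamily (ev a) (coord a) := hcoord a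
  have hlub (a : V) : IsLUB (l1PartialSumsF μ (coord a)) (pn μ a) :=
    (hfam a).isLUB_l1PartialSumsF (hV.norm a)
  refine ⟨fun a => ⟨_, hlub a⟩, fun a b => ?_, fun f a => ?_, fun a b hab => ?_, ?_, hlub⟩
  · exact (hfam (a + b)).right_unique (hV.add a b ▸ (hfam a).add (hfam b))
  · exact (hfam (f • a)).right_unique ((hfam a).smul (hV.smul f a))
  · exact hV.bij.injective ((hfam a).left_unique ENNReal.one_ne_top (hab ▸ hfam b))
  · rintro g ⟨b, hb⟩
    obtain ⟨f, hf⟩ := exists_isCoordFamily_of_mem_upperBounds hb.1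
    obtain ⟨a, rfl⟩ := hV.bij.surjective f
    exact ⟨a, (hfam a).right_unique hf⟩

/-- Let `𝕏` be a σ-finite measure space and `I` a nonempty index set. The
map `φ : L⁰(𝕏;ℓ₁(I)) → ℓ₁(I, L⁰(𝕏))`, `φ(a) := (a(·)_i)_{i ∈ I}`, is an isomorphism of
Banach `L⁰(𝕏)`-modules: it takes values in `ℓ₁(I, L⁰(𝕏))`, it is additive, `L⁰(𝕏)`-linear,
bijective onto `ℓ₁(I, L⁰(𝕏))`, and it preserves the pointwise norm, i.e.
`|φ a|₁ = ⋁_F ∑_{i ∈ F} |a(·)_i| = |a|`. Here `V` is (a realization of) `L⁰(𝕏;ℓ₁(I))`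
and `coord a i` is the coordinate function `a(·)_i ∈ L⁰(𝕏)`. -/
theorem L0_valued_l1_eq_l1_of_L0
    (μ : Measure X) [SigmaFinite μ] {I : Type*} [Nonempty I]
    (V : Type*) [AddCommGroup V] [Module (L0 μ) V] [BanachMod μ V]
    (ev : V → (X →ₘ[μ] lp (fun _ : I => ℝ) 1))
    (hV : IsL0B μ (lp (fun _ : I => ℝ) 1) V ev)
    (coord : V → I → L0 μ)
    (hcoord : ∀ (a : V) (i : I), ∀ᵐ x ∂μ, (coord a i) x = (ev a) x i) :
    (∀ a : V, Meml1F μ (coord a))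
    ∧ (∀ a b : V, coord (a + b) = coord a + coord b)
    ∧ (∀ (f : L0 μ) (a : V), coord (f • a) = fun i => f * coord a i)
    ∧ Function.Injective coord
    ∧ (∀ g : I → L0 μ, Meml1F μ g → ∃ a : V, coord a = g)
    ∧ (∀ a : V, IsLUB (l1PartialSumsF μ (coord a)) (pn μ a)) :=
  L0_valued_l1_eq_l1_of_L0_general μ V ev hV coord hcoord

end Paper
end
end
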